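/- arXiv:1009.4966 — 5 statements merged into one kernel-verified Lean document; each statement's English description precedes it below -/
import Mathlib

section
/- Let K be a finite field with q elements and let k, ℓ ≥ 2. Let X ⊆ ℙ^{kℓ−1} be the algebraic toric set parameterized by the edges of the complete bipartite graph K_{k,ℓ}, i.e., X = {[(a_i·b_j)_{1≤i≤k, 1≤j≤ℓ}] : a ∈ (K*)^k, b ∈ (K*)^ℓ}, and let T_1 ⊆ ℙ^{ℓ−1} and T_2 ⊆ ℙ^{k−1} be projective tori. Then for every d ≥ 1: the length of C_X(d) equals (q−1)^{k+ℓ−2}; the dimension of C_X(d) equals H_{T_1}(d)·H_{T_2}(d); and the minimum distance of C_X(d) equals δ_1·δ_2, where δ_i is the minimum distance of C_{T_i}(d). -/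
open MvPolynomial

/-- The projective torus in `ℙ^(s-1)` over `K`: the classes of points all of whose
coordinates are nonzero (a condition invariant under scaling, tested on the chosen
representative). -/
noncomputable def projTorus (K : Type) [Field K] (s : ℕ) :
    Set (Projectivization K (Fin s → K)) :=
  {p | ∀ i, p.rep i ≠ 0}

/-- The Hilbert function of a set `Y` of points of projective space (equivalently the
dimension of the parameterized code of order `d` on `Y`): the `K`-dimension of the
space of functions on `Y` of the form `[P] ↦ F(P)/P_{i0}^d` with `F` homogeneous of
degree `d`. -/
noncomputable def hilbFn (K : Type) [Field K] {ι : Type}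
    (Y : Set (Projectivization K (ι → K))) (i0 : ι) (d : ℕ) : ℕ :=
  Module.finrank K ↥(Submodule.span K
    {f : ↥Y → K | ∃ F : MvPolynomial ι K, F.IsHomogeneous d ∧
      ∀ p : ↥Y, f p = eval p.1.rep F / (p.1.rep i0) ^ d})

/-- The minimum distance of the parameterized (evaluation) code of order `d` on a set
`Y` of points of projective space: the least number of points of `Y` at which a
homogeneous polynomial of degree `d` not vanishing identically on `Y` is nonzero. -/
noncomputable def minDist (K : Type) [Field K] {ι : Type}
    (Y : Set (Projectivization K (ι → K))) (d : ℕ) : ℕ :=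
  sInf {n | ∃ F : MvPolynomial ι K, F.IsHomogeneous d ∧
    (∃ p ∈ Y, eval p.rep F ≠ 0) ∧
    n = Set.ncard {p ∈ Y | eval p.rep F ≠ 0}}

/-!
The toric set `X` is the Segre image of `T₂ × T₁`. Forms of degree `d` are sums of products of `d`
linear forms, so `C_X(d)` is the `d`-th power, in the algebra of functions on `X`, of the span of
the coordinates. On `T₂ × T₁` the coordinates are the products `a_i b_j`, and a power of a product
of two spans is the product of their powers. Hence, up to the nonzero rescaling of entries caused
by the choice of representatives, `C_X(d)` is the product code of `C_{T₂}(d)` and `C_{T₁}(d)`.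

The dimension of a product code is multiplicative because functions of `a` and functions of `b` are
linearly disjoint. For the minimum weight, every row and every column of a word lies in the
corresponding factor: a nonzero word has a nonzero column, with at least `δ₂` nonzero entries, and
each of these lies in a row with at least `δ₁` nonzero entries.
-/

section MonomialEquivalence

variable {K A B : Type*} [Field K]

/-- The minimum Hamming weight of a nonzero word of a linear code `C ⊆ K^A`, with the junk value
`0` for the zero code. -/
noncomputable def minWeight (C : Submodule K (A → K)) : ℕ :=
  sInf {n | ∃ f ∈ C, f ≠ 0 ∧ n = (Function.support f).ncard}

lemma minWeight_le {C : Submodule K (A → K)} {f : A → K} (hf : f ∈ C) (hf0 : f ≠ 0) :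
    minWeight C ≤ (Function.support f).ncard :=
  Nat.sInf_le ⟨f, hf, hf0, rfl⟩

lemma exists_ncard_support_eq_minWeight {C : Submodule K (A → K)} (hC : C ≠ ⊥) :
    ∃ f ∈ C, f ≠ 0 ∧ (Function.support f).ncard = minWeight C := by
  obtain ⟨g, hg, hg0⟩ := C.ne_bot_iff.1 hC
  obtain ⟨f, hf, hf0, hn⟩ :=
    Nat.sInf_mem (s := {n | ∃ f ∈ C, f ≠ 0 ∧ n = (Function.support f).ncard}) ⟨_, g, hg, hg0, rfl⟩
  exact ⟨f, hf, hf0, hn.symm⟩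

lemma minWeight_bot : minWeight (⊥ : Submodule K (A → K)) = 0 := by
  simp [minWeight]

/-- The monomial transformation `K^B ≃ K^A` attached to a bijection `e` and nonzero weights `c`,
`f ↦ (a ↦ c a * f (e a))`; these are the isometries for the Hamming weight. -/
def monomialEquiv (e : A ≃ B) (c : A → Kˣ) : (B → K) ≃ₗ[K] (A → K) :=
  LinearEquiv.funCongrLeft K K e ≪≫ₗ
    LinearEquiv.piCongrRight fun a => LinearEquiv.smulOfUnit (c a)

lemma monomialEquiv_apply (e : A ≃ B) (c : A → Kˣ) (f : B → K) (a : A) :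
    monomialEquiv e c f a = c a * f (e a) := rfl

lemma ncard_support_monomialEquiv (e : A ≃ B) (c : A → Kˣ) (f : B → K) :
    (Function.support (monomialEquiv e c f)).ncard = (Function.support f).ncard := by
  have hsupp : Function.support (monomialEquiv e c f) = e ⁻¹' Function.support f := by
    ext a
    simp [monomialEquiv_apply]
  rw [hsupp, Set.ncard_preimage_of_injective_subset_range e.injective (by simp)]

lemma minWeight_map_monomialEquiv (e : A ≃ B) (c : A → Kˣ) (C : Submodule K (B → K)) :
    minWeight (C.map (monomialEquiv e c).toLinearMap) = minWeight C := by
  simp only [minWeight, Submodule.mem_map, LinearEquiv.coe_coe, exists_exists_and_eq_and,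
    LinearEquiv.map_ne_zero_iff, ncard_support_monomialEquiv]

end MonomialEquivalence

section ProductCode

variable {K A B : Type*} [Field K]

/-- Pullback of functions along `f`, as a homomorphism of function algebras. -/
def pullback (K : Type*) [Field K] (f : A → B) : (B → K) →ₐ[K] (A → K) :=
  AlgHom.pi fun a => Pi.evalAlgHom K (fun _ => K) (f a)

lemma pullback_injective {f : A → B} (hf : Function.Surjective f) :
    Function.Injective (pullback K f) :=
  hf.injective_comp_right

/-- The product (tensor) code of `C ⊆ K^A` and `D ⊆ K^B`: the span in `K^(A × B)` of the words
`(a, b) ↦ f a * g b` with `f ∈ C` and `g ∈ D`, written as a product of submodules of the algebra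
`K^(A × B)`. -/
def productCode (C : Submodule K (A → K)) (D : Submodule K (B → K)) :
    Submodule K (A × B → K) :=
  C.map (pullback K Prod.fst).toLinearMap * D.map (pullback K Prod.snd).toLinearMap

variable {C : Submodule K (A → K)} {D : Submodule K (B → K)}

lemma mul_mem_productCode {f : A → K} {g : B → K} (hf : f ∈ C) (hg : g ∈ D) :
    (fun ab : A × B => f ab.1 * g ab.2) ∈ productCode C D :=
  Submodule.mul_mem_mul (Submodule.mem_map_of_mem hf) (Submodule.mem_map_of_mem hg)

lemma productCode_pow (C : Submodule K (A → K)) (D : Submodule K (B → K)) (d : ℕ) :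
    productCode C D ^ d = productCode (C ^ d) (D ^ d) := by
  simp only [productCode, mul_pow, Submodule.map_pow]

lemma row_mem_of_mem_productCode {F : A × B → K} (hF : F ∈ productCode C D) (a : A) :
    (fun b => F (a, b)) ∈ D := by
  suffices h : productCode C D ≤ D.comap (pullback K (Prod.mk a)).toLinearMap from h hF
  refine Submodule.mul_le.2 ?_
  rintro _ ⟨f, -, rfl⟩ _ ⟨g, hg, rfl⟩
  exact D.smul_mem (f a) hg

lemma column_mem_of_mem_productCode {F : A × B → K} (hF : F ∈ productCode C D) (b : B) :
    (fun a => F (a, b)) ∈ C := by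
  suffices h : productCode C D ≤ C.comap (pullback K fun a => (a, b)).toLinearMap from h hF
  rw [productCode, mul_comm]
  refine Submodule.mul_le.2 ?_
  rintro _ ⟨g, -, rfl⟩ _ ⟨f, hf, rfl⟩
  exact C.smul_mem (g b) hf

-- A relation `∑ⱼ fⱼ(a) gⱼ(b) = 0` is, for each fixed `a`, a linear relation among the `gⱼ`.
lemma linearDisjoint_of_depends_on_fst_snd {M N : Submodule K (A × B → K)}
    (hM : ∀ f ∈ M, ∀ a b b', f (a, b) = f (a, b')) (hN : ∀ g ∈ N, ∀ a a' b, g (a, b) = g (a', b)) :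
    M.LinearDisjoint N := by
  let g := Module.Basis.ofVectorSpace K N
  have hg : LinearIndependent K fun j => (g j : A × B → K) :=
    g.linearIndependent.map' N.subtype N.ker_subtype
  refine .of_basis_right _ _ g (LinearMap.ker_eq_bot'.2 fun f hf => ?_)
  ext j ⟨a, b⟩
  let l := f.mapRange (fun h : M => (h : A × B → K) (a, b)) rfl
  have hl : Finsupp.linearCombination K (fun j => (g j : A × B → K)) l = 0 := by
    ext ⟨a', b'⟩
    have hab' : ∑ j ∈ f.support, (f j : A × B → K) (a, b') * (g j : A × B → K) (a, b') = 0 := by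
      simpa [Submodule.mulRightMap_apply, Finsupp.sum] using congrFun hf (a, b')
    rw [Finsupp.linearCombination_apply, Finsupp.sum_mapRange_index (by simp)]
    simpa [Finsupp.sum, hM _ (f _).2 a b b', hN _ (g _).2 a' a b'] using hab'
  exact DFunLike.congr_fun (linearIndependent_iff.1 hg l hl) j

lemma linearDisjoint_map_pullback (C : Submodule K (A → K)) (D : Submodule K (B → K)) :
    (C.map (pullback K (Prod.fst : A × B → A)).toLinearMap).LinearDisjoint
      (D.map (pullback K (Prod.snd : A × B → B)).toLinearMap) := by
  refine linearDisjoint_of_depends_on_fst_snd ?_ ?_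
  · rintro _ ⟨f, -, rfl⟩ a _ _
    rfl
  · rintro _ ⟨g, -, rfl⟩ _ _ b
    rfl

lemma finrank_productCode (C : Submodule K (A → K)) (D : Submodule K (B → K)) :
    Module.finrank K (productCode C D) = Module.finrank K C * Module.finrank K D := by
  rcases isEmpty_or_nonempty A with _ | _
  · simp [Module.finrank_zero_of_subsingleton]
  rcases isEmpty_or_nonempty B with _ | _
  · simp [Module.finrank_zero_of_subsingleton]
  let eC := C.equivMapOfInjective (pullback K (Prod.fst : A × B → A)).toLinearMap
    (pullback_injective Prod.fst_surjective)
  let eD := D.equivMapOfInjective (pullback K (Prod.snd : A × B → B)).toLinearMap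
    (pullback_injective Prod.snd_surjective)
  let e := TensorProduct.congr eC eD ≪≫ₗ (linearDisjoint_map_pullback C D).mulMap
  exact e.finrank_eq.symm.trans (Module.finrank_tensorProduct ..)

lemma ncard_mul_le_ncard_of_forall_row [Finite A] [Finite B] {S : Set A} {R : Set (A × B)} {t : ℕ}
    (h : ∀ a ∈ S, t ≤ {b | (a, b) ∈ R}.ncard) : S.ncard * t ≤ R.ncard := by
  classical
  cases nonempty_fintype A
  cases nonempty_fintype B
  let R' : Finset (A × B) := {ab | ab ∈ R ∧ ab.1 ∈ S}
  have hfiber (a) (ha : a ∈ S.toFinset) : t ≤ (R'.filter fun ab => ab.1 = a).card := by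
    rw [Set.mem_toFinset] at ha
    refine (h a ha).trans_eq ?_
    rw [← Set.ncard_image_of_injective _ (Prod.mk_right_injective a), ← Set.ncard_coe_finset]
    congr 1
    ext ⟨a', b⟩
    simp only [R', Set.mem_image, Finset.mem_coe, Finset.mem_filter]
    grind
  calc S.ncard * t = t * S.toFinset.card := by rw [Set.ncard_eq_toFinset_card', mul_comm]
    _ ≤ R'.card := Finset.mul_card_image_le_card_of_maps_to (by simp [R']) t hfiber
    _ = (R' : Set (A × B)).ncard := (Set.ncard_coe_finset R').symm
    _ ≤ R.ncard := Set.ncard_le_ncard fun ab hab => by simp_all [R']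

lemma minWeight_mul_le_ncard_support [Finite A] [Finite B] {F : A × B → K}
    (hF : F ∈ productCode C D) (hF0 : F ≠ 0) :
    minWeight C * minWeight D ≤ (Function.support F).ncard := by
  obtain ⟨⟨a₀, b₀⟩, hab⟩ := Function.ne_iff.1 hF0
  calc minWeight C * minWeight D
      ≤ (Function.support fun a => F (a, b₀)).ncard * minWeight D :=
        Nat.mul_le_mul_right _ <|
          minWeight_le (column_mem_of_mem_productCode hF b₀) (Function.ne_iff.2 ⟨a₀, hab⟩)
    _ ≤ (Function.support F).ncard := ncard_mul_le_ncard_of_forall_row fun a ha =>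
        minWeight_le (row_mem_of_mem_productCode hF a) (Function.ne_iff.2 ⟨b₀, ha⟩)

lemma minWeight_productCode [Finite A] [Finite B]
    (C : Submodule K (A → K)) (D : Submodule K (B → K)) :
    minWeight (productCode C D) = minWeight C * minWeight D := by
  rcases eq_or_ne C ⊥ with rfl | hC
  · simp [productCode, minWeight_bot]
  rcases eq_or_ne D ⊥ with rfl | hD
  · simp [productCode, minWeight_bot]
  obtain ⟨f, hf, hf0, hfn⟩ := exists_ncard_support_eq_minWeight hC
  obtain ⟨g, hg, hg0, hgn⟩ := exists_ncard_support_eq_minWeight hD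
  have hfg := mul_mem_productCode hf hg
  have hfg0 : (fun ab : A × B => f ab.1 * g ab.2) ≠ 0 := by
    obtain ⟨a, ha⟩ := Function.ne_iff.1 hf0
    obtain ⟨b, hb⟩ := Function.ne_iff.1 hg0
    exact Function.ne_iff.2 ⟨(a, b), mul_ne_zero ha hb⟩
  have hsupp : Function.support (fun ab : A × B => f ab.1 * g ab.2) =
      Function.support f ×ˢ Function.support g := by
    ext ab
    simp
  apply le_antisymm
  · calc minWeight (productCode C D)
        ≤ (Function.support fun ab : A × B => f ab.1 * g ab.2).ncard := minWeight_le hfg hfg0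
      _ = minWeight C * minWeight D := by rw [hsupp, Set.ncard_prod, hfn, hgn]
  · obtain ⟨F, hF, hF0, hFn⟩ :=
      exists_ncard_support_eq_minWeight ((productCode C D).ne_bot_iff.2 ⟨_, hfg, hfg0⟩)
    exact hFn ▸ minWeight_mul_le_ncard_support hF hF0

end ProductCode

section EvalCode

variable {K A B ι κ : Type*} [Field K]

/-- The coordinates of the tensor product of two coordinate vectors. -/
def outerProd (x : ι → K) (y : κ → K) : ι × κ → K := fun ij => x ij.1 * y ij.2

/-- The code of the values of the homogeneous polynomials of degree `d` at a family
`v` of vectors. -/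
noncomputable def evalCode (v : A → ι → K) (d : ℕ) : Submodule K (A → K) :=
  (homogeneousSubmodule ι K d).map (aeval fun i a => v a i).toLinearMap

lemma aeval_apply_eq_eval (v : A → ι → K) (F : MvPolynomial ι K) (a : A) :
    aeval (fun i a => v a i) F a = eval (v a) F := by
  change Pi.evalAlgHom K (fun _ => K) a (aeval (fun i a => v a i) F) = eval (v a) F
  rw [comp_aeval_apply, aeval_eq_eval]
  rfl

lemma mem_evalCode {v : A → ι → K} {d : ℕ} {f : A → K} :
    f ∈ evalCode v d ↔
      ∃ F : MvPolynomial ι K, F.IsHomogeneous d ∧ (fun a => eval (v a) F) = f := by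
  simp [evalCode, Submodule.mem_map, funext_iff, aeval_apply_eq_eval]

lemma evalCode_eq_span_pow (v : A → ι → K) (d : ℕ) :
    evalCode v d = Submodule.span K (Set.range fun i a => v a i) ^ d := by
  rw [evalCode, ← homogeneousSubmodule_one_pow, Submodule.map_pow,
    homogeneousSubmodule_one_eq_span_X, Submodule.map_span, ← Set.range_comp]
  simp [Function.comp_def]

lemma productCode_span_range (f : ι → A → K) (g : κ → B → K) :
    productCode (Submodule.span K (Set.range f)) (Submodule.span K (Set.range g)) =
      Submodule.span K (Set.range fun (ij : ι × κ) (ab : A × B) => f ij.1 ab.1 * g ij.2 ab.2) := by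
  rw [productCode, Submodule.map_span, Submodule.map_span, Submodule.span_mul_span,
    ← Set.range_comp, ← Set.range_comp, ← Set.image2_mul, Set.image2_range]
  rfl

lemma evalCode_outerProd (v : A → ι → K) (w : B → κ → K) (d : ℕ) :
    evalCode (fun ab : A × B => outerProd (v ab.1) (w ab.2)) d =
      productCode (evalCode v d) (evalCode w d) := by
  simp only [evalCode_eq_span_pow, ← productCode_pow, productCode_span_range, outerProd]

lemma eval_smul_of_isHomogeneous {R : Type*} [CommSemiring R] {F : MvPolynomial ι R} {d : ℕ}
    (hF : F.IsHomogeneous d) (c : R) (x : ι → R) : eval (c • x) F = c ^ d * eval x F := by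
  rw [eval_eq, eval_eq, Finset.mul_sum]
  refine Finset.sum_congr rfl fun m hm => ?_
  have hdeg : ∑ i ∈ m.support, m i = d := by
    rw [← Finsupp.degree_apply, Finsupp.degree_eq_weight_one]
    exact hF (mem_support_iff.1 hm)
  simp only [Pi.smul_apply, smul_eq_mul, mul_pow, Finset.prod_mul_distrib,
    Finset.prod_pow_eq_pow_sum, hdeg]
  ring

lemma evalCode_eq_map_monomialEquiv {v : A → ι → K} {w : B → ι → K} (e : A ≃ B) (c : A → Kˣ)
    (h : ∀ a, v a = c a • w (e a)) (d : ℕ) :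
    evalCode v d = (evalCode w d).map (monomialEquiv e (c ^ d)).toLinearMap := by
  have heval {F : MvPolynomial ι K} (hF : F.IsHomogeneous d) :
      (fun a => eval (v a) F) = monomialEquiv e (c ^ d) fun b => eval (w b) F := by
    ext a
    simp [h, Units.smul_def, eval_smul_of_isHomogeneous hF, monomialEquiv_apply]
  ext f
  simp only [mem_evalCode, Submodule.mem_map, LinearEquiv.coe_coe]
  constructor
  · rintro ⟨F, hF, rfl⟩
    exact ⟨_, ⟨F, hF, rfl⟩, (heval hF).symm⟩
  · rintro ⟨_, ⟨F, hF, rfl⟩, rfl⟩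
    exact ⟨F, hF, heval hF⟩

end EvalCode

section ProjCode

variable {K ι : Type} [Field K]

/-- The code on a set `Y` of points of projective space given by the values of forms of degree `d`
at the chosen representatives. -/
noncomputable def projCode (Y : Set (Projectivization K (ι → K))) (d : ℕ) : Submodule K (Y → K) :=
  evalCode (fun p : Y => p.1.rep) d

lemma minDist_eq_minWeight (Y : Set (Projectivization K (ι → K))) (d : ℕ) :
    minDist K Y d = minWeight (projCode Y d) := by
  have hncard (F : MvPolynomial ι K) : {p ∈ Y | eval p.rep F ≠ 0}.ncard =
      (Function.support fun p : Y => eval p.1.rep F).ncard := by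
    rw [← Set.ncard_image_of_injective _ Subtype.val_injective]
    congr 1
    ext p
    simp [and_comm]
  have hne (F : MvPolynomial ι K) :
      (∃ p ∈ Y, eval p.rep F ≠ 0) ↔ (fun p : Y => eval p.1.rep F) ≠ 0 := by
    simp [Function.ne_iff]
  simp only [minDist, minWeight, projCode, mem_evalCode, hncard, hne, exists_exists_and_eq_and]

-- Dividing by `P_{i₀} ^ d` is a monomial transformation.
lemma hilbFn_eq_finrank {Y : Set (Projectivization K (ι → K))} {i₀ : ι}
    (hY : ∀ p ∈ Y, p.rep i₀ ≠ 0) (d : ℕ) :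
    hilbFn K Y i₀ d = Module.finrank K (projCode Y d) := by
  let c (p : Y) : Kˣ := (Units.mk0 (p.1.rep i₀) (hY p p.2) ^ d)⁻¹
  have hset : {f : Y → K | ∃ F : MvPolynomial ι K, F.IsHomogeneous d ∧
      ∀ p : Y, f p = eval p.1.rep F / p.1.rep i₀ ^ d} =
      ((projCode Y d).map (monomialEquiv (.refl Y) c).toLinearMap : Set (Y → K)) := by
    ext f
    simp only [projCode, Set.mem_ofPred_eq, SetLike.mem_coe, Submodule.mem_map, mem_evalCode,
      LinearEquiv.coe_coe, exists_exists_and_eq_and]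
    refine exists_congr fun F => and_congr_right fun _ => ?_
    rw [eq_comm, _root_.funext_iff]
    simp [monomialEquiv_apply, c, div_eq_inv_mul]
  rw [hilbFn, hset, Submodule.span_eq, LinearEquiv.finrank_map_eq]

end ProjCode

section Segre

variable {K ι κ : Type*} [Field K]

lemma outerProd_ne_zero {x : ι → K} {y : κ → K} (hx : x ≠ 0) (hy : y ≠ 0) :
    outerProd x y ≠ 0 := by
  obtain ⟨i, hi⟩ := Function.ne_iff.1 hx
  obtain ⟨j, hj⟩ := Function.ne_iff.1 hy
  exact Function.ne_iff.2 ⟨(i, j), mul_ne_zero hi hj⟩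

lemma smul_outerProd (c : K) (x : ι → K) (y : κ → K) :
    outerProd (c • x) y = c • outerProd x y := by
  ext
  simp [outerProd, mul_assoc]

lemma outerProd_smul (c : K) (x : ι → K) (y : κ → K) :
    outerProd x (c • y) = c • outerProd x y := by
  ext
  simp [outerProd, mul_left_comm]

/-- The Segre embedding of a product of two projective spaces. -/
noncomputable def segre (y : Projectivization K (ι → K)) (z : Projectivization K (κ → K)) :
    Projectivization K (ι × κ → K) :=
  .mk K (outerProd y.rep z.rep) (outerProd_ne_zero y.rep_nonzero z.rep_nonzero)

lemma segre_mk_mk {x : ι → K} {y : κ → K} (hx : x ≠ 0) (hy : y ≠ 0) :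
    segre (.mk K x hx) (.mk K y hy) = .mk K (outerProd x y) (outerProd_ne_zero hx hy) := by
  obtain ⟨a, ha⟩ := Projectivization.exists_smul_eq_mk_rep K x hx
  obtain ⟨b, hb⟩ := Projectivization.exists_smul_eq_mk_rep K y hy
  refine (Projectivization.mk_eq_mk_iff' ..).2 ⟨a * b, ?_⟩
  rw [← ha, ← hb, Units.smul_def, Units.smul_def, smul_outerProd, outerProd_smul, smul_smul]

lemma exists_rep_segre_eq_smul (y : Projectivization K (ι → K)) (z : Projectivization K (κ → K)) :
    ∃ c : Kˣ, (segre y z).rep = c • outerProd y.rep z.rep :=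
  (Projectivization.exists_smul_eq_mk_rep K ..).imp fun _ => Eq.symm

lemma segre_injective2 : Function.Injective2 (segre (K := K) (ι := ι) (κ := κ)) := by
  intro y y' z z' h
  obtain ⟨c, hc⟩ := (Projectivization.mk_eq_mk_iff' ..).1 h
  have hc (i j) : c * (y'.rep i * z'.rep j) = y.rep i * z.rep j := congrFun hc (i, j)
  obtain ⟨i, hi : y.rep i ≠ 0⟩ := Function.ne_iff.1 y.rep_nonzero
  obtain ⟨j, hj : z.rep j ≠ 0⟩ := Function.ne_iff.1 z.rep_nonzero
  rw [← y.mk_rep, ← y'.mk_rep, ← z.mk_rep, ← z'.mk_rep, Projectivization.mk_eq_mk_iff',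
    Projectivization.mk_eq_mk_iff']
  constructor
  · refine ⟨c * z'.rep j / z.rep j, funext fun i' => mul_right_cancel₀ hj ?_⟩
    rw [← hc, Pi.smul_apply, smul_eq_mul]
    field
  · refine ⟨c * y'.rep i / y.rep i, funext fun j' => mul_left_cancel₀ hi ?_⟩
    rw [← hc, Pi.smul_apply, smul_eq_mul]
    field

/-- The image of `Y × Z` under the Segre embedding. -/
def segreProd (Y : Set (Projectivization K (ι → K))) (Z : Set (Projectivization K (κ → K))) :
    Set (Projectivization K (ι × κ → K)) :=
  Function.uncurry segre '' Y ×ˢ Z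

variable (Y : Set (Projectivization K (ι → K))) (Z : Set (Projectivization K (κ → K)))

/-- The Segre embedding as a bijection from `Y × Z` onto its image. -/
noncomputable def segreProdEquiv : Y × Z ≃ segreProd Y Z :=
  (Equiv.Set.prod Y Z).symm.trans (Equiv.Set.image _ _ segre_injective2.uncurry)

lemma coe_segreProdEquiv (yz : Y × Z) : (segreProdEquiv Y Z yz : _) = segre yz.1.1 yz.2.1 := rfl

lemma ncard_segreProd : (segreProd Y Z).ncard = Y.ncard * Z.ncard := by
  rw [segreProd, Set.ncard_image_of_injective _ segre_injective2.uncurry, Set.ncard_prod]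

end Segre

section SegreCode

variable {K ι κ : Type} [Field K]

lemma exists_projCode_segreProd_eq_map (Y : Set (Projectivization K (ι → K)))
    (Z : Set (Projectivization K (κ → K))) (d : ℕ) :
    ∃ (e : segreProd Y Z ≃ Y × Z) (c : segreProd Y Z → Kˣ), projCode (segreProd Y Z) d =
      (productCode (projCode Y d) (projCode Z d)).map (monomialEquiv e c).toLinearMap := by
  let e := (segreProdEquiv Y Z).symm
  have hrep (p : segreProd Y Z) :
      ∃ c : Kˣ, p.1.rep = c • outerProd (e p).1.1.rep (e p).2.1.rep := by
    obtain ⟨yz, rfl⟩ := (segreProdEquiv Y Z).surjective p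
    simpa [e, coe_segreProdEquiv] using exists_rep_segre_eq_smul yz.1.1 yz.2.1
  choose c hc using hrep
  refine ⟨e, c ^ d, ?_⟩
  rw [projCode, projCode, projCode, ← evalCode_outerProd]
  exact evalCode_eq_map_monomialEquiv e c hc d

lemma minDist_segreProd (Y : Set (Projectivization K (ι → K)))
    (Z : Set (Projectivization K (κ → K))) [Finite Y] [Finite Z] (d : ℕ) :
    minDist K (segreProd Y Z) d = minDist K Y d * minDist K Z d := by
  obtain ⟨e, c, h⟩ := exists_projCode_segreProd_eq_map Y Z d
  simp only [minDist_eq_minWeight, h, minWeight_map_monomialEquiv, minWeight_productCode]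

lemma hilbFn_segreProd {Y : Set (Projectivization K (ι → K))}
    {Z : Set (Projectivization K (κ → K))} {i₀ : ι} {j₀ : κ}
    (hY : ∀ p ∈ Y, p.rep i₀ ≠ 0) (hZ : ∀ p ∈ Z, p.rep j₀ ≠ 0) (d : ℕ) :
    hilbFn K (segreProd Y Z) (i₀, j₀) d = hilbFn K Y i₀ d * hilbFn K Z j₀ d := by
  have hYZ : ∀ p ∈ segreProd Y Z, p.rep (i₀, j₀) ≠ 0 := by
    rintro _ ⟨⟨y, z⟩, ⟨hy, hz⟩, rfl⟩
    obtain ⟨c, hc⟩ := exists_rep_segre_eq_smul y z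
    simp only [Function.uncurry_apply_pair, hc]
    exact mul_ne_zero c.ne_zero (mul_ne_zero (hY y hy) (hZ z hz))
  obtain ⟨e, c, h⟩ := exists_projCode_segreProd_eq_map Y Z d
  rw [hilbFn_eq_finrank hYZ, hilbFn_eq_finrank hY, hilbFn_eq_finrank hZ, h,
    LinearEquiv.finrank_map_eq, finrank_productCode]

end SegreCode

section Torus

variable {K : Type} [Field K]

lemma mk_mem_projTorus {s : ℕ} {x : Fin s → K} (hx : x ≠ 0) :
    .mk K x hx ∈ projTorus K s ↔ ∀ i, x i ≠ 0 := by
  obtain ⟨c, hc⟩ := Projectivization.exists_smul_eq_mk_rep K x hx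
  simp [projTorus, ← hc, Units.smul_def]

lemma projTorus_succ_eq_range (n : ℕ) :
    projTorus K (n + 1) = Set.range fun u : Fin n → Kˣ =>
      .mk K (Fin.cons 1 fun i => (u i : K)) (Function.ne_iff.2 ⟨0, one_ne_zero⟩) := by
  ext p
  constructor
  · intro (hp : ∀ i, p.rep i ≠ 0)
    refine ⟨fun i => Units.mk0 (p.rep i.succ / p.rep 0) (div_ne_zero (hp _) (hp 0)), ?_⟩
    conv_rhs => rw [← p.mk_rep]
    refine (Projectivization.mk_eq_mk_iff' ..).2 ⟨(p.rep 0)⁻¹, funext fun i => ?_⟩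
    cases i using Fin.cases with
    | zero => simp [hp 0]
    | succ i => simp [div_eq_inv_mul]
  · rintro ⟨u, rfl⟩
    exact (mk_mem_projTorus _).2 (Fin.cases one_ne_zero fun i => (u i).ne_zero)

lemma ncard_projTorus [Fintype K] (s : ℕ) [NeZero s] :
    (projTorus K s).ncard = (Fintype.card K - 1) ^ (s - 1) := by
  classical
  obtain ⟨n, rfl⟩ := Nat.exists_eq_succ_of_ne_zero (NeZero.ne s)
  rw [projTorus_succ_eq_range, ← Nat.card_coe_set_eq, Nat.card_range_of_injective]
  · simp [Fintype.card_units]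
  · intro u u' h
    obtain ⟨c, hc⟩ := (Projectivization.mk_eq_mk_iff' ..).1 h
    obtain rfl : c = 1 := by simpa using congrFun hc 0
    ext i
    simpa using (congrFun hc i.succ).symm

lemma segreProd_projTorus (k ℓ : ℕ) [NeZero k] [NeZero ℓ] :
    segreProd (projTorus K k) (projTorus K ℓ) =
      {p | ∃ (a : Fin k → K) (b : Fin ℓ → K), (∀ i, a i ≠ 0) ∧ (∀ j, b j ≠ 0) ∧
        p.rep = fun ij => a ij.1 * b ij.2} := by
  ext p
  constructor
  · rintro ⟨⟨y, z⟩, ⟨hy, hz⟩, rfl⟩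
    obtain ⟨c, hc⟩ := exists_rep_segre_eq_smul y z
    refine ⟨c • y.rep, z.rep, fun i => mul_ne_zero c.ne_zero (hy i), hz, hc.trans ?_⟩
    exact (smul_outerProd (c : K) y.rep z.rep).symm
  · rintro ⟨a, b, ha, hb, hp⟩
    have ha0 : a ≠ 0 := Function.ne_iff.2 ⟨0, ha 0⟩
    have hb0 : b ≠ 0 := Function.ne_iff.2 ⟨0, hb 0⟩
    refine ⟨(.mk K a ha0, .mk K b hb0),
      ⟨(mk_mem_projTorus ha0).2 ha, (mk_mem_projTorus hb0).2 hb⟩, ?_⟩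
    rw [Function.uncurry_apply_pair, segre_mk_mk, ← p.mk_rep]
    exact (Projectivization.mk_eq_mk_iff' ..).2 ⟨1, (one_smul K _).trans hp⟩

end Torus

/-- For the algebraic toric set `X ⊆ ℙ^(kℓ-1)` parameterized by the edges of the
complete bipartite graph `K_{k,ℓ}` (points `[(a_i b_j)_{i,j}]` with `a ∈ (K*)^k`,
`b ∈ (K*)^ℓ`; a set closed under the scaling action, so described by its chosen
representatives), and projective tori `T₁ ⊆ ℙ^(ℓ-1)`, `T₂ ⊆ ℙ^(k-1)`: the length of
`C_X(d)` is `(q-1)^(k+ℓ-2)`, its dimension is `H_{T₁}(d) · H_{T₂}(d)`, and its minimum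
distance is the product of the minimum distances of `C_{T₁}(d)` and `C_{T₂}(d)`. -/
theorem stmt_12 (K : Type) [Field K] [Fintype K] (q k ℓ d : ℕ)
    (hK : Fintype.card K = q) (hk : 2 ≤ k) (hl : 2 ≤ ℓ) (hd : 1 ≤ d) :
    let X : Set (Projectivization K (Fin k × Fin ℓ → K)) :=
      {p | ∃ (a : Fin k → K) (b : Fin ℓ → K),
        (∀ i, a i ≠ 0) ∧ (∀ j, b j ≠ 0) ∧
        p.rep = fun ij => a ij.1 * b ij.2}
    Set.ncard X = (q - 1) ^ (k + ℓ - 2) ∧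
    hilbFn K X ((⟨0, by omega⟩ : Fin k), (⟨0, by omega⟩ : Fin ℓ)) d =
      hilbFn K (projTorus K ℓ) (⟨0, by omega⟩ : Fin ℓ) d *
        hilbFn K (projTorus K k) (⟨0, by omega⟩ : Fin k) d ∧
    minDist K X d = minDist K (projTorus K ℓ) d * minDist K (projTorus K k) d := by
  intro X
  have : NeZero k := ⟨by omega⟩
  have : NeZero ℓ := ⟨by omega⟩
  have hX : X = segreProd (projTorus K k) (projTorus K ℓ) := (segreProd_projTorus k ℓ).symm
  rw [hX]
  refine ⟨?_, ?_, ?_⟩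
  · rw [ncard_segreProd, ncard_projTorus, ncard_projTorus, hK, ← pow_add]
    congr 1
    omega
  · rw [hilbFn_segreProd (Y := projTorus K k) (Z := projTorus K ℓ) (fun _ hp => hp _)
      (fun _ hp => hp _), mul_comm]
  · rw [minDist_segreProd, mul_comm]
end

section
/- Let K be a finite field with q elements and let v_1,…,v_s ∈ {0,1}^n be the characteristic vectors of the edges of a clutter, and let X be the algebraic toric set parameterized by y^{v_1},…,y^{v_s}. Let i ∈ {1,…,s}, let b ≥ 1 be an integer and c = (c_1,…,c_s) ∈ ℕ^s with c_i = 0 and b = c_1 + ⋯ + c_s, and suppose that the homogeneous binomial f = t_i^b − t_1^{c_1}⋯t_s^{c_s} vanishes at every point of X, i.e., (x^{v_i})^b = Π_{j=1}^s (x^{v_j})^{c_j} for all x ∈ (K*)^n. Then b ≥ q−1. Moreover, if b = q−1, then c = (q−1)e_j for some j ≠ i, i.e., f = t_i^{q−1} − t_j^{q−1}. -/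
open MvPolynomial

/-!
Evaluating the binomial at the points all of whose coordinates but the `t`-th are `1` gives
`b v_i(t) ≡ ∑_j c_j v_j(t)` modulo the exponent `m` of the group of coordinates, which is `q - 1`
for `K*` and, by convention, `0` for a group without finite exponent. The right-hand side lies
between `0` and `b = ∑_j c_j`. If `b < m` or `m = 0`, then it vanishes wherever `v_i` does, so every
`v_j` with `c_j ≠ 0` is supported inside `v_i`, against the clutter condition. If `b = m`, then it
is `0` or `b` for each `t`; in either case all the `v_j` with `c_j ≠ 0` have the same `t`-th
coordinate, so there is only one of them.
-/

section WeightedSums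

variable {ι : Type*} [Fintype ι] {c w : ι → ℕ} {m : ℕ} {j k : ι}

lemma sum_mul_le_sum_of_le_one (hw : ∀ j, w j ≤ 1) : ∑ j, c j * w j ≤ ∑ j, c j :=
  Finset.sum_le_sum fun j _ ↦ mul_le_of_le_one_right' (hw j)

lemma eq_zero_of_sum_mul_eq_zero (h : ∑ j, c j * w j = 0) (hk : c k ≠ 0) : w k = 0 :=
  (mul_eq_zero.mp (Finset.sum_eq_zero_iff.mp h k (Finset.mem_univ k))).resolve_left hk

lemma eq_one_of_sum_mul_eq_sum (hw : ∀ j, w j ≤ 1) (h : ∑ j, c j * w j = ∑ j, c j)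
    (hk : c k ≠ 0) : w k = 1 := by
  have hterm : c k * w k = c k :=
    (Finset.sum_eq_sum_iff_of_le fun j _ ↦ mul_le_of_le_one_right' (hw j)).mp h k
      (Finset.mem_univ k)
  exact (mul_eq_left₀ hk).mp hterm

lemma eq_zero_of_dvd_sum_mul (hw : ∀ j, w j ≤ 1) (hm : ¬(0 < m ∧ m ≤ ∑ j, c j))
    (hdvd : m ∣ ∑ j, c j * w j) (hk : c k ≠ 0) : w k = 0 := by
  refine eq_zero_of_sum_mul_eq_zero (Nat.eq_zero_of_not_pos fun hpos ↦ hm ⟨?_, ?_⟩) hk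
  · exact Nat.pos_of_dvd_of_pos hdvd hpos
  · exact (Nat.le_of_dvd hpos hdvd).trans (sum_mul_le_sum_of_le_one hw)

lemma eq_of_sum_dvd_sum_mul (hw : ∀ j, w j ≤ 1) (hdvd : ∑ j, c j ∣ ∑ j, c j * w j)
    (hj : c j ≠ 0) (hk : c k ≠ 0) : w j = w k := by
  rcases Nat.eq_zero_or_pos (∑ j, c j * w j) with hzero | hpos
  · rw [eq_zero_of_sum_mul_eq_zero hzero hj, eq_zero_of_sum_mul_eq_zero hzero hk]
  · have hsum := (sum_mul_le_sum_of_le_one hw).antisymm (Nat.le_of_dvd hpos hdvd)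
    rw [eq_one_of_sum_mul_eq_sum hw hsum hj, eq_one_of_sum_mul_eq_sum hw hsum hk]

end WeightedSums

section ExponentVectors

variable {ι τ : Type*} [Fintype ι] {v : ι → τ → ℕ} {c : ι → ℕ} {j : ι}

lemma pos_and_le_sum_of_modEq {u : τ → ℕ} {b m : ℕ} (hv : ∀ j t, v j t ≤ 1)
    (hmod : ∀ t, b * u t ≡ ∑ j, c j * v j t [MOD m]) (hj : c j ≠ 0) (hju : ¬v j ≤ u) :
    0 < m ∧ m ≤ ∑ j, c j := by
  by_contra hm
  refine hju fun t ↦ ?_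
  rcases Nat.eq_zero_or_pos (u t) with hut | hut
  · have hdvd : m ∣ ∑ j, c j * v j t := by
      simpa [hut, Nat.modEq_zero_iff_dvd] using (hmod t).symm
    exact (eq_zero_of_dvd_sum_mul (fun j ↦ hv j t) hm hdvd hj).trans_le (u t).zero_le
  · exact (hv j t).trans hut

lemma eq_single_of_sum_dvd [DecidableEq ι] (hv : ∀ j t, v j t ≤ 1) (hinj : Function.Injective v)
    (hdvd : ∀ t, ∑ j, c j ∣ ∑ j, c j * v j t) (hj : c j ≠ 0) :
    c = Pi.single j (∑ j, c j) := by
  have hzero : ∀ k, k ≠ j → c k = 0 := fun k hkj ↦ by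
    by_contra hk
    exact hkj (hinj (funext fun t ↦ eq_of_sum_dvd_sum_mul (fun j ↦ hv j t) (hdvd t) hk hj))
  rw [Fintype.sum_eq_single j hzero]
  ext k
  rcases eq_or_ne k j with rfl | hkj
  · rw [Pi.single_eq_same]
  · rw [Pi.single_eq_of_ne hkj, hzero k hkj]

end ExponentVectors

section Monomials

variable {ι τ : Type*} [Fintype τ]

lemma prod_mulSingle_pow {M : Type*} [CommMonoid M] [DecidableEq τ] (t : τ) (g : M) (a : τ → ℕ) :
    ∏ s, (Pi.mulSingle t g : τ → M) s ^ a s = g ^ a t := by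
  rw [Fintype.prod_eq_single t fun s hs ↦ by simp [hs], Pi.mulSingle_eq_same]

lemma prod_prod_pow_pow {M : Type*} [CommMonoid M] [Fintype ι] (x : τ → M) (v : ι → τ → ℕ)
    (c : ι → ℕ) :
    ∏ j, (∏ t, x t ^ v j t) ^ c j = ∏ t, x t ^ ∑ j, c j * v j t := by
  simp_rw [← Finset.prod_pow, ← pow_mul', ← Finset.prod_pow_eq_pow_sum]
  exact Finset.prod_comm

lemma modEq_exponent_iff_forall_pow_eq {G : Type*} [Group G] {a b : ℕ} :
    a ≡ b [MOD Monoid.exponent G] ↔ ∀ g : G, g ^ a = g ^ b := by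
  rw [Nat.ModEq.comm, Nat.modEq_iff_dvd, Group.exponent_dvd_sub_iff_zpow_eq_zpow]
  simp only [zpow_natCast]

lemma modEq_exponent_of_forall_prod_pow_eq {G : Type*} [CommGroup G] {a b : τ → ℕ}
    (h : ∀ x : τ → G, ∏ t, x t ^ a t = ∏ t, x t ^ b t) (t : τ) :
    a t ≡ b t [MOD Monoid.exponent G] := by
  classical
  exact modEq_exponent_iff_forall_pow_eq.mpr fun g : G ↦ by
    simpa only [prod_mulSingle_pow] using h (Pi.mulSingle t g)

end Monomials

lemma exponent_units_eq_card_sub_one (K : Type*) [Field K] [Fintype K] :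
    Monoid.exponent Kˣ = Fintype.card K - 1 := by
  classical
  rw [IsCyclic.exponent_eq_card, Nat.card_eq_fintype_card, Fintype.card_units]

theorem stmt_13_general {G ι τ : Type*} [CommGroup G] [Fintype ι] [DecidableEq ι] [Fintype τ]
    {v : ι → τ → ℕ} (hv : ∀ j t, v j t ≤ 1) (hclutter : Pairwise fun j k ↦ ¬v j ≤ v k)
    {i : ι} {c : ι → ℕ} (hc : c ≠ 0) (hci : c i = 0)
    (hvanish : ∀ x : τ → G,
      (∏ t, x t ^ v i t) ^ ∑ j, c j = ∏ j, (∏ t, x t ^ v j t) ^ c j) :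
    Monoid.ExponentExists G ∧ Monoid.exponent G ≤ ∑ j, c j ∧
      (∑ j, c j = Monoid.exponent G → ∃ j, j ≠ i ∧ c = Pi.single j (Monoid.exponent G)) := by
  obtain ⟨j, hj⟩ : ∃ j, c j ≠ 0 := Function.ne_iff.mp hc
  have hji : j ≠ i := by
    rintro rfl
    exact hj hci
  have hmod : ∀ t, (∑ j, c j) * v i t ≡ ∑ j, c j * v j t [MOD Monoid.exponent G] :=
    modEq_exponent_of_forall_prod_pow_eq fun x ↦ by
      rw [← prod_prod_pow_pow, ← hvanish x, ← Finset.prod_pow]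
      simp_rw [pow_mul']
  obtain ⟨hpos, hle⟩ := pos_and_le_sum_of_modEq hv hmod hj (hclutter hji)
  refine ⟨Monoid.exponent_pos.mp hpos, hle, fun hb ↦ ⟨j, hji, ?_⟩⟩
  have hinj : Function.Injective v := fun k l hkl ↦ by
    by_contra hne
    exact hclutter hne hkl.le
  have hdvd : ∀ t, ∑ j, c j ∣ ∑ j, c j * v j t := fun t ↦
    ((hmod t).dvd_iff hb.dvd).mp (dvd_mul_right _ _)
  rw [← hb]
  exact eq_single_of_sum_dvd hv hinj hdvd hj

/-- Let `v_1,…,v_s ∈ {0,1}^n` be the characteristic vectors of the edges of a clutter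
(distinct 0-1 vectors, none of whose supports is contained in another). If the
homogeneous binomial `t_i^b - t_1^{c_1}⋯t_s^{c_s}` (with `c_i = 0`, `b = Σ c_j ≥ 1`)
vanishes at every point of the algebraic toric set parameterized by
`y^{v_1},…,y^{v_s}`, then `b ≥ q-1`; and if `b = q-1`, then `c = (q-1)eⱼ` for some
`j ≠ i`, i.e. the binomial is `t_i^{q-1} - t_j^{q-1}`. -/
theorem stmt_13 (K : Type) [Field K] [Fintype K] (q n s : ℕ)
    (hK : Fintype.card K = q)
    (v : Fin s → Fin n → ℕ) (hv01 : ∀ i t, v i t ≤ 1)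
    (hinj : Function.Injective v)
    (hclutter : ∀ i j : Fin s, i ≠ j → ¬ ∀ t, v i t ≤ v j t)
    (i : Fin s) (b : ℕ) (hb : 1 ≤ b) (c : Fin s → ℕ)
    (hci : c i = 0) (hbc : b = ∑ j, c j)
    (hvanish : ∀ x : Fin n → K, (∀ t, x t ≠ 0) →
      (∏ t, x t ^ v i t) ^ b = ∏ j, (∏ t, x t ^ v j t) ^ c j) :
    q - 1 ≤ b ∧
    (b = q - 1 → ∃ j : Fin s, j ≠ i ∧ c = Pi.single j (q - 1)) := by
  subst hK hbc
  have hc : c ≠ 0 := by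
    rintro rfl
    simp at hb
  rw [← exponent_units_eq_card_sub_one K]
  exact (stmt_13_general hv01 (fun j k ↦ hclutter j k) hc hci fun x : Fin n → Kˣ ↦ Units.ext <| by
    simpa using hvanish (fun t ↦ x t) fun t ↦ (x t).ne_zero).2
end

section
/- Let K be a finite field with q elements, let v_1,…,v_s ∈ {0,1}^n be the characteristic vectors of the edges of a clutter, let X be the algebraic toric set parameterized by y^{v_1},…,y^{v_s}, and let I(X) ⊆ S = K[t_1,…,t_s] be its vanishing ideal. If I(X) is a complete intersection, i.e., I(X) can be generated by s−1 homogeneous polynomials, then I(X) = (t_1^{q−1} − t_s^{q−1}, t_2^{q−1} − t_s^{q−1}, …, t_{s−1}^{q−1} − t_s^{q−1}). -/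
open MvPolynomial

/-!
Write `I` for the vanishing ideal and `𝔪` for the ideal of the variables. A polynomial of total
degree `< q - 1` that vanishes on the monomial image of the torus `(K*)ⁿ` vanishes on the monomial
image of all of `Kⁿ`, and for a clutter the latter contains every coordinate vector `e_j`, as the
image of the point `v_j`. Hence no pure power `t_j ^ b` with `b < q - 1` occurs in an element of
`I`, so the coefficients of the `t_j ^ (q - 1)` with `j ≠ s` define a linear map `I / 𝔪I → K^(s-1)`.
It sends the differences `t_j ^ (q - 1) - t_s ^ (q - 1)` to the standard basis. If `I` has `s - 1`
generators, then `dim I / 𝔪I ≤ s - 1`, the map is an isomorphism, and the differences generate `I`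
by the graded Nakayama lemma.
-/

section Generators

variable {R k V ι : Type*} [CommRing R] [CommRing k] [AddCommGroup V] [Module k V] [Fintype ι]

lemma le_sup_ker_mul_of_surjOn {I J : Ideal R} {g : ι → R} (hg : I = Ideal.span (Set.range g))
    (ε : R →+* k) (π : R →+ V) (hπ : ∀ a, ∀ p ∈ I, π (a * p) = ε a • π p)
    (hJI : J ≤ I) (hJ : Set.SurjOn π J Set.univ) (hcard : Fintype.card ι ≤ Module.finrank k V) :
    I ≤ J ⊔ RingHom.ker ε * I := by
  have hgI (i : ι) : g i ∈ I := hg ▸ Ideal.subset_span ⟨i, rfl⟩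
  have exists_coeffs {p : R} (hp : p ∈ I) : ∃ c : ι → R, ∑ i, c i * g i = p :=
    Ideal.mem_span_range_iff_exists_fun.mp (hg ▸ hp)
  have map_sum_mul (c : ι → R) : π (∑ i, c i * g i) = ∑ i, ε (c i) • π (g i) := by
    rw [map_sum]
    exact Finset.sum_congr rfl fun i _ => hπ _ _ (hgI i)
  have span_top : ⊤ ≤ Submodule.span k (Set.range fun i => π (g i)) := by
    intro w _
    obtain ⟨p, hpJ, rfl⟩ := hJ (Set.mem_univ w)
    obtain ⟨c, rfl⟩ := exists_coeffs (hJI hpJ)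
    rw [map_sum_mul]
    exact Submodule.sum_mem _ fun i _ => Submodule.smul_mem _ _ (Submodule.subset_span ⟨i, rfl⟩)
  have linInd := linearIndependent_of_top_le_span_of_card_le_finrank span_top hcard
  have mem_of_map_eq_zero {p : R} (hp : p ∈ I) (hp0 : π p = 0) : p ∈ RingHom.ker ε * I := by
    obtain ⟨c, rfl⟩ := exists_coeffs hp
    have hc := Fintype.linearIndependent_iff.mp linInd _ ((map_sum_mul c).symm.trans hp0)
    exact sum_mem fun i _ => Ideal.mul_mem_mul (hc i) (hgI i)
  intro p hp
  obtain ⟨p', hp', hpp'⟩ := hJ (Set.mem_univ (π p))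
  rw [← add_sub_cancel p' p]
  exact Submodule.add_mem_sup hp'
    (mem_of_map_eq_zero (sub_mem hp (hJI hp')) (by rw [map_sub, hpp', sub_self]))

end Generators

section GradedNakayama

attribute [local instance] MvPolynomial.gradedAlgebra

variable {σ R : Type*} [CommSemiring R]

lemma le_sup_pow_mul_of_le_sup_mul {A : Type*} [CommSemiring A] {I J M : Ideal A}
    (h : I ≤ J ⊔ M * I) (n : ℕ) : I ≤ J ⊔ M ^ n * I := by
  induction n with
  | zero => simp
  | succ n ih =>
    calc I ≤ J ⊔ M ^ n * I := ih
      _ ≤ J ⊔ M ^ n * (J ⊔ M * I) := by gcongr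
      _ = J ⊔ M ^ n * J ⊔ M ^ (n + 1) * I := by rw [Ideal.mul_sup, ← mul_assoc, pow_succ, sup_assoc]
      _ = J ⊔ M ^ (n + 1) * I := by rw [sup_eq_left.mpr (Ideal.mul_le_right : M ^ n * J ≤ J)]

lemma le_of_le_sup_idealOfVars_mul {I J : Ideal (MvPolynomial σ R)}
    (hJ : J.IsHomogeneous (homogeneousSubmodule σ R)) (h : I ≤ J ⊔ idealOfVars σ R * I) :
    I ≤ J := by
  intro p hp
  rw [mem_iff_homogeneousComponent_mem hJ]
  intro n
  obtain ⟨f, hf, r, hr, rfl⟩ := Submodule.mem_sup.mp (le_sup_pow_mul_of_le_sup_mul h (n + 1) hp)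
  have hr0 : homogeneousComponent n r = 0 := by
    refine homogeneousComponent_eq_zero' n r fun m hm hmn => ?_
    have hr' : r ∈ idealOfVars σ R ^ (n + 1) := Ideal.mul_le_left hr
    have := (mem_pow_idealOfVars_iff (n + 1) r).mp hr' m hm
    omega
  rw [map_add, hr0, add_zero]
  exact (mem_iff_homogeneousComponent_mem hJ f).mp hf n

lemma ker_constantCoeff_eq_idealOfVars :
    RingHom.ker (constantCoeff : MvPolynomial σ R →+* R) = idealOfVars σ R := by
  ext p
  rw [← pow_one (idealOfVars σ R), mem_pow_idealOfVars_iff']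
  simp [constantCoeff_eq, Finsupp.degree_eq_zero_iff]

end GradedNakayama

section PurePowers

variable {σ R : Type*}

section CommSemiring

variable [CommSemiring R]

lemma coeff_single_mul_of_coeff_single_eq_zero {j : σ} {N : ℕ} {g : MvPolynomial σ R}
    (hg : ∀ b < N, coeff (Finsupp.single j b) g = 0) (h : MvPolynomial σ R) :
    coeff (Finsupp.single j N) (h * g) = constantCoeff h * coeff (Finsupp.single j N) g := by
  classical
  rw [coeff_mul, Finsupp.antidiagonal_single, Finset.sum_map,
    Finset.sum_eq_single (0, N) _ (by simp)]
  · simp [constantCoeff_eq]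
  · rintro ⟨a, b⟩ hab hne
    have hb : b < N := by
      rw [Finset.HasAntidiagonal.mem_antidiagonal] at hab
      grind
    simp [hg b hb]

lemma eval_piSingle_one_of_isHomogeneous [DecidableEq σ] {f : MvPolynomial σ R} {d : ℕ}
    (hf : f.IsHomogeneous d) (j : σ) :
    eval (Pi.single j 1) f = coeff (Finsupp.single j d) f := by
  rw [eval_eq, Finset.sum_eq_single (Finsupp.single j d)]
  · rw [Finset.prod_eq_one, mul_one]
    intro i hi
    rw [Finset.mem_singleton.mp (Finsupp.support_single_subset hi), Pi.single_eq_same, one_pow]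
  · intro m hm hne
    obtain ⟨i, hi, hij⟩ : ∃ i ∈ m.support, i ≠ j := by
      by_contra! h
      have hmj : m = Finsupp.single j (m j) :=
        Finsupp.support_subset_singleton.mp fun i hi => Finset.mem_singleton.mpr (h i hi)
      have hdeg : m.degree = d := by
        rw [Finsupp.degree_eq_weight_one]
        exact hf (mem_support_iff.mp hm)
      rw [hmj, Finsupp.degree_single] at hdeg
      exact hne (hdeg ▸ hmj)
    rw [Finset.prod_eq_zero hi, mul_zero]
    rw [Pi.single_eq_of_ne hij, zero_pow (Finsupp.mem_support_iff.mp hi)]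
  · intro hm
    rw [notMem_support_iff.mp hm, zero_mul]

/-- The vector of coefficients of the pure powers `t_i ^ N` with `i ≠ l`. It detects minimal
generators of an ideal in whose elements no lower pure power occurs. -/
noncomputable def purePowerCoeffs (R : Type*) [CommSemiring R] (N : ℕ) (l : σ) :
    MvPolynomial σ R →ₗ[R] ({i // i ≠ l} → R) :=
  LinearMap.pi fun i => lcoeff R (Finsupp.single (i : σ) N)

end CommSemiring

variable [CommRing R]

/-- The ideal generated by the differences `t_i ^ N - t_l ^ N` with `i ≠ l`; for a field with
`N + 1` elements it is the vanishing ideal of the full projective torus. -/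
noncomputable def powSubPowIdeal (R : Type*) [CommRing R] (N : ℕ) (l : σ) :
    Ideal (MvPolynomial σ R) :=
  Ideal.span {h | ∃ i, i ≠ l ∧ h = X i ^ N - X l ^ N}

lemma purePowerCoeffs_X_pow_sub_X_pow [DecidableEq σ] {N : ℕ} (hN : N ≠ 0) {l : σ}
    (i : {i // i ≠ l}) :
    purePowerCoeffs R N l (X (i : σ) ^ N - X l ^ N) = Pi.single i 1 := by
  ext j
  have hlj : l ≠ j := j.2.symm
  simp [purePowerCoeffs, coeff_X_pow, Finsupp.single_left_inj hN, hlj, Pi.single_apply,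
    Subtype.ext_iff, eq_comm]

lemma purePowerCoeffs_surjOn_powSubPowIdeal [Finite σ] {N : ℕ} (hN : N ≠ 0) (l : σ) :
    Set.SurjOn (purePowerCoeffs R N l) (powSubPowIdeal R N l) Set.univ := by
  classical
  cases nonempty_fintype σ
  intro w _
  refine ⟨∑ i, w i • (X i.1 ^ N - X l ^ N), ?_, ?_⟩
  · exact sum_mem fun i _ => Submodule.smul_of_tower_mem _ _ (Ideal.subset_span ⟨i, i.2, rfl⟩)
  · simp only [map_sum, map_smul, purePowerCoeffs_X_pow_sub_X_pow hN]
    exact (pi_eq_sum_univ' w).symm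

attribute [local instance] MvPolynomial.gradedAlgebra

lemma powSubPowIdeal_isHomogeneous (N : ℕ) (l : σ) :
    (powSubPowIdeal R N l).IsHomogeneous (homogeneousSubmodule σ R) := by
  refine Ideal.homogeneous_span _ _ ?_
  rintro _ ⟨i, -, rfl⟩
  exact ⟨N, (isHomogeneous_X_pow i N).sub (isHomogeneous_X_pow l N)⟩

end PurePowers

section MonomialParametrization

variable {σ τ K : Type*}

lemma degreeOf_bind₁_le {R : Type*} [CommSemiring R] {Y : σ → MvPolynomial τ R} {t : τ} {k : ℕ}
    (hY : ∀ j, (Y j).degreeOf t ≤ k) (f : MvPolynomial σ R) :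
    (bind₁ Y f).degreeOf t ≤ f.totalDegree * k := by
  rw [bind₁, aeval_def, eval₂_eq]
  refine (degreeOf_sum_le _ _ _).trans (Finset.sup_le fun m hm => ?_)
  calc degreeOf t (algebraMap R (MvPolynomial τ R) (coeff m f) * ∏ i ∈ m.support, Y i ^ m i)
    _ ≤ degreeOf t (∏ i ∈ m.support, Y i ^ m i) := degreeOf_C_mul_le _ _ _
    _ ≤ ∑ i ∈ m.support, degreeOf t (Y i ^ m i) := degreeOf_prod_le _ _ _
    _ ≤ ∑ i ∈ m.support, m i * k :=
      Finset.sum_le_sum fun i _ => (degreeOf_pow_le _ _ _).trans (by gcongr; exact hY i)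
    _ = m.degree * k := by rw [← Finset.sum_mul]; rfl
    _ ≤ f.totalDegree * k := by gcongr; exact le_totalDegree hm

variable [Fintype τ]

/-- The tuple of monomials `(x ^ v_j)_j` at the point `x`. -/
def monomialPoint [CommSemiring K] (v : σ → τ → ℕ) (x : τ → K) : σ → K :=
  fun j => ∏ t, x t ^ v j t

lemma degreeOf_monomialPoint_X_le [CommSemiring K] [Nontrivial K] (v : σ → τ → ℕ) (j : σ) (t : τ) :
    (monomialPoint v (X : τ → MvPolynomial τ K) j).degreeOf t ≤ v j t := by
  classical
  calc (monomialPoint v (X : τ → MvPolynomial τ K) j).degreeOf t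
    _ ≤ ∑ u, (X u ^ v j u : MvPolynomial τ K).degreeOf t := degreeOf_prod_le _ _ _
    _ ≤ ∑ u, v j u * if t = u then 1 else 0 :=
      Finset.sum_le_sum fun u _ => (degreeOf_pow_le _ _ _).trans (by rw [degreeOf_X])
    _ = v j t := by simp

lemma eval_bind₁_monomialPoint_X [CommSemiring K] (v : σ → τ → ℕ) (x : τ → K)
    (f : MvPolynomial σ K) :
    eval x (bind₁ (monomialPoint v X) f) = eval (monomialPoint v x) f := by
  rw [eval, eval₂Hom_bind₁]
  congr 2
  ext j
  simp [monomialPoint]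

/-- The vanishing ideal `I(X)` of the algebraic toric set `X` parameterized by the monomials
`y ^ v_j`. A homogeneous polynomial is evaluated at the affine representatives `(x ^ v_j)_j`. -/
noncomputable def toricVanishingIdeal (K : Type*) [Field K] (v : σ → τ → ℕ) :
    Ideal (MvPolynomial σ K) :=
  Ideal.span {f | (∃ e, f.IsHomogeneous e) ∧
    ∀ x : τ → K, (∀ t, x t ≠ 0) → eval (monomialPoint v x) f = 0}

lemma monomialPoint_natCast_eq_piSingle [DecidableEq σ] [CommSemiring K] {v : σ → τ → ℕ}
    (hv01 : ∀ i t, v i t ≤ 1) (hclutter : ∀ i j, i ≠ j → ¬ ∀ t, v i t ≤ v j t) (j : σ) :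
    monomialPoint v (fun t => (v j t : K)) = Pi.single j 1 := by
  ext i
  obtain rfl | hij := eq_or_ne i j
  · rw [Pi.single_eq_same]
    -- Every factor is `1 ^ 1` or `0 ^ 0`.
    refine Finset.prod_eq_one fun t _ => ?_
    obtain h0 | h1 := Nat.le_one_iff_eq_zero_or_eq_one.mp (hv01 i t) <;> simp [*]
  · obtain ⟨t, ht⟩ := not_forall.mp (hclutter i j hij)
    have hvt : v i t ≠ 0 ∧ v j t = 0 := by have := hv01 i t; omega
    rw [Pi.single_eq_of_ne hij]
    exact Finset.prod_eq_zero (Finset.mem_univ t) (by simp [hvt])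

section Field

attribute [local instance] MvPolynomial.gradedAlgebra

variable [Field K] {v : σ → τ → ℕ}

lemma toricVanishingIdeal_isHomogeneous :
    (toricVanishingIdeal K v).IsHomogeneous (homogeneousSubmodule σ K) :=
  Ideal.homogeneous_span _ _ fun _ hf => hf.1

lemma eval_monomialPoint_eq_zero_of_mem {p : MvPolynomial σ K} (hp : p ∈ toricVanishingIdeal K v)
    {x : τ → K} (hx : ∀ t, x t ≠ 0) : eval (monomialPoint v x) p = 0 := by
  have h : toricVanishingIdeal K v ≤ RingHom.ker (eval (monomialPoint v x)) :=
    Ideal.span_le.mpr fun f hf => hf.2 x hx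
  exact h hp

variable [Fintype K]

lemma powSubPowIdeal_le_toricVanishingIdeal (l : σ) :
    powSubPowIdeal K (Fintype.card K - 1) l ≤ toricVanishingIdeal K v := by
  refine Ideal.span_mono ?_
  rintro _ ⟨i, -, rfl⟩
  refine ⟨⟨_, (isHomogeneous_X_pow i _).sub (isHomogeneous_X_pow l _)⟩, fun x hx => ?_⟩
  have pow_eq_one (j : σ) : monomialPoint v x j ^ (Fintype.card K - 1) = 1 :=
    FiniteField.pow_card_sub_one_eq_one _
      (Finset.prod_ne_zero_iff.mpr fun t _ => pow_ne_zero _ (hx t))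
  simp only [map_sub, map_pow, eval_X, pow_eq_one, sub_self]

lemma eval_monomialPoint_eq_zero_of_totalDegree_lt (hv01 : ∀ i t, v i t ≤ 1)
    {f : MvPolynomial σ K} (hdeg : f.totalDegree < Fintype.card K - 1)
    (hf : ∀ x : τ → K, (∀ t, x t ≠ 0) → eval (monomialPoint v x) f = 0) (x : τ → K) :
    eval (monomialPoint v x) f = 0 := by
  classical
  have bind_eq_zero : bind₁ (monomialPoint v X) f = 0 := by
    refine eq_zero_of_eval_zero_at_prod_finset _ (fun _ => Finset.univ.erase 0) (fun t => ?_) ?_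
    · rw [Finset.card_erase_of_mem (Finset.mem_univ _), Finset.card_univ]
      have := degreeOf_bind₁_le (fun j => (degreeOf_monomialPoint_X_le v j t).trans (hv01 j t)) f
      omega
    · intro x hx
      rw [eval_bind₁_monomialPoint_X]
      exact hf x fun t => Finset.ne_of_mem_erase (hx t)
  rw [← eval_bind₁_monomialPoint_X, bind_eq_zero, map_zero]

lemma coeff_single_eq_zero_of_mem_toricVanishingIdeal (hv01 : ∀ i t, v i t ≤ 1)
    (hclutter : ∀ i j, i ≠ j → ¬ ∀ t, v i t ≤ v j t) {p : MvPolynomial σ K}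
    (hp : p ∈ toricVanishingIdeal K v) (j : σ) {b : ℕ} (hb : b < Fintype.card K - 1) :
    coeff (Finsupp.single j b) p = 0 := by
  classical
  have component_mem : homogeneousComponent b p ∈ toricVanishingIdeal K v :=
    (mem_iff_homogeneousComponent_mem toricVanishingIdeal_isHomogeneous p).mp hp b
  have component_homogeneous := homogeneousComponent_isHomogeneous b p
  have eval_component := eval_monomialPoint_eq_zero_of_totalDegree_lt hv01
    (component_homogeneous.totalDegree_le.trans_lt hb)
    (fun _ hx => eval_monomialPoint_eq_zero_of_mem component_mem hx) (fun t => (v j t : K))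
  rwa [monomialPoint_natCast_eq_piSingle hv01 hclutter,
    eval_piSingle_one_of_isHomogeneous component_homogeneous, coeff_homogeneousComponent,
    if_pos (Finsupp.degree_single j b)] at eval_component

end Field

end MonomialParametrization

theorem stmt_14_general {K σ τ ι : Type*} [Field K] [Fintype K] [Fintype σ] [Fintype τ] [Fintype ι]
    {v : σ → τ → ℕ} (hv01 : ∀ i t, v i t ≤ 1)
    (hclutter : ∀ i j, i ≠ j → ¬ ∀ t, v i t ≤ v j t) (l : σ) {g : ι → MvPolynomial σ K}
    (hcard : Fintype.card ι < Fintype.card σ)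
    (hg : toricVanishingIdeal K v = Ideal.span (Set.range g)) :
    toricVanishingIdeal K v = powSubPowIdeal K (Fintype.card K - 1) l := by
  classical
  have hN : Fintype.card K - 1 ≠ 0 := Nat.sub_ne_zero_of_lt Fintype.one_lt_card
  have finrank_eq : Module.finrank K ({i // i ≠ l} → K) = Fintype.card σ - 1 := by simp
  refine le_antisymm (le_of_le_sup_idealOfVars_mul (powSubPowIdeal_isHomogeneous _ l) ?_)
    (powSubPowIdeal_le_toricVanishingIdeal l)
  rw [← ker_constantCoeff_eq_idealOfVars]
  refine le_sup_ker_mul_of_surjOn hg constantCoeff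
    (purePowerCoeffs K (Fintype.card K - 1) l).toAddMonoidHom
    (fun a p hp => ?_) (powSubPowIdeal_le_toricVanishingIdeal l)
    (purePowerCoeffs_surjOn_powSubPowIdeal hN l) (by rw [finrank_eq]; omega)
  ext i
  exact coeff_single_mul_of_coeff_single_eq_zero
    (fun _ hb => coeff_single_eq_zero_of_mem_toricVanishingIdeal hv01 hclutter hp _ hb) a

/-- Let `v_1,…,v_s ∈ {0,1}^n` be the characteristic vectors of the edges of a clutter
and let `X` be the algebraic toric set parameterized by `y^{v_1},…,y^{v_s}`, with
vanishing ideal `I(X)` (the ideal generated by the homogeneous polynomials vanishing at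
every point of `X`). If `I(X)` is a complete intersection, i.e. generated by `s-1`
homogeneous polynomials, then `I(X) = (t_1^{q-1} - t_s^{q-1},…,t_{s-1}^{q-1} - t_s^{q-1})`. -/
theorem stmt_14 (K : Type) [Field K] [Fintype K] (q n s : ℕ)
    (hK : Fintype.card K = q) (hs : 1 ≤ s)
    (v : Fin s → Fin n → ℕ) (hv01 : ∀ i t, v i t ≤ 1)
    (hinj : Function.Injective v)
    (hclutter : ∀ i j : Fin s, i ≠ j → ¬ ∀ t, v i t ≤ v j t) :
    let IX : Ideal (MvPolynomial (Fin s) K) := Ideal.span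
      {f | (∃ e, f.IsHomogeneous e) ∧
        ∀ x : Fin n → K, (∀ t, x t ≠ 0) →
          eval (fun j : Fin s => ∏ t, x t ^ v j t) f = 0}
    (∃ g : Fin (s - 1) → MvPolynomial (Fin s) K,
        (∀ i, ∃ e, (g i).IsHomogeneous e) ∧ IX = Ideal.span (Set.range g)) →
    IX = Ideal.span {h : MvPolynomial (Fin s) K |
      ∃ i : Fin s, (i : ℕ) < s - 1 ∧
        h = X i ^ (q - 1) - X (⟨s - 1, by omega⟩ : Fin s) ^ (q - 1)} := by
  rintro IX ⟨g, -, hg⟩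
  refine (stmt_14_general hv01 hclutter ⟨s - 1, by omega⟩ (by grind [Fintype.card_fin]) hg).trans ?_
  have lt_iff (i : Fin s) : (i : ℕ) < s - 1 ↔ i ≠ ⟨s - 1, by omega⟩ := by
    simp only [ne_eq, Fin.ext_iff]
    omega
  simp only [powSubPowIdeal, lt_iff, hK]
end

section
/- Let K be a finite field with q elements, let v_1,…,v_s ∈ {0,1}^n be the characteristic vectors of the edges of a clutter, let X be the algebraic toric set parameterized by y^{v_1},…,y^{v_s}, and let T = {[x] : x ∈ (K*)^s} be the projective torus in ℙ^{s−1}. Then the vanishing ideal I(X) is a complete intersection (i.e., it can be generated by s−1 homogeneous polynomials) if and only if X = T. -/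
open MvPolynomial

/-- The algebraic toric set `X ⊆ ℙ^(s-1)` parameterized by the monomials
`y^{v_1},…,y^{v_s}`: the classes `[(x^{v_1},…,x^{v_s})]` for `x ∈ (K*)^n`. -/
def toricSet (K : Type) [Field K] {n s : ℕ} (hs : 1 ≤ s)
    (v : Fin s → Fin n → ℕ) : Set (Projectivization K (Fin s → K)) :=
  {p | ∃ x : Fin n → K, ∃ hx : ∀ t, x t ≠ 0,
    p = Projectivization.mk K (fun j => ∏ t, x t ^ v j t)
      (by
        intro h0
        have h1 := congrFun h0 ⟨0, hs⟩
        simp only [Pi.zero_apply] at h1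
        exact Finset.prod_ne_zero_iff.mpr (fun t _ => pow_ne_zero _ (hx t)) h1)}

/-! The idea is to compare `I(X)` with `I(T)`, which is generated by the `s - 1` binomials
`t_i ^ (q - 1) - t_0 ^ (q - 1)`, `i ≠ 0`: the ideals agree exactly when `X = T`.

Let `f ∈ I(X)` be homogeneous of degree `d < q - 1`. As the exponents are `0` or `1`, the
polynomial `f(y^{v_1}, …, y^{v_s})` has degree at most `d` in each `y_t`, so, vanishing on
`(K*)^n`, it is zero. Substituting `y = v_i` gives `f(e_i) = 0`, because `v_i ^ v_j = δ_ij` in a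
clutter.

Suppose now that `s - 1` forms `g_k` generate `I(X)`, and express the binomials through them. At
the points `e_i`, `i ≠ 0`, the binomials take the values `δ_ij` and the `g_k` of degree less than
`q - 1` vanish, so a square matrix of scalars forces every `g_k` to have degree `q - 1` and to be a
linear combination of the binomials. Hence `I(X) ⊆ I(T)`. -/

section Homogeneous

variable {σ R : Type*} [CommRing R]

lemma eval_smul_of_isHomogeneous_s15 {f : MvPolynomial σ R} {d : ℕ} (hf : f.IsHomogeneous d)
    (c : R) (y : σ → R) : eval (c • y) f = c ^ d * eval y f := by
  rw [eval_eq, eval_eq, Finset.mul_sum]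
  refine Finset.sum_congr rfl fun a ha => ?_
  simp only [Pi.smul_apply, smul_eq_mul, mul_pow, Finset.prod_mul_distrib,
    Finset.prod_pow_eq_pow_sum, hf.degree_eq_sum_deg_support ha]
  ring

lemma degreeOf_aeval_le {τ : Type*} {p : σ → MvPolynomial τ R} {t : τ} {c : ℕ}
    (hp : ∀ j, (p j).degreeOf t ≤ c) (f : MvPolynomial σ R) :
    (aeval p f).degreeOf t ≤ f.totalDegree * c := by
  rw [aeval_def, eval₂_eq]
  refine (degreeOf_sum_le _ _ _).trans (Finset.sup_le fun a ha => ?_)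
  calc
    _ ≤ degreeOf t (∏ j ∈ a.support, p j ^ a j) := degreeOf_C_mul_le _ _ _
    _ ≤ ∑ j ∈ a.support, degreeOf t (p j ^ a j) := degreeOf_prod_le _ _ _
    _ ≤ ∑ j ∈ a.support, a j * c := Finset.sum_le_sum fun j _ =>
        (degreeOf_pow_le _ _ _).trans (Nat.mul_le_mul_left _ (hp j))
    _ = (∑ j ∈ a.support, a j) * c := (Finset.sum_mul _ _ _).symm
    _ ≤ f.totalDegree * c := Nat.mul_le_mul_right _ (le_totalDegree ha)

lemma degreeOf_prod_X_pow [Nontrivial R] {τ : Type*} [Fintype τ] (a : τ → ℕ) (t : τ) :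
    (∏ u, X u ^ a u : MvPolynomial τ R).degreeOf t = a t := by
  have hmonomial : (∏ u, X u ^ a u : MvPolynomial τ R) =
      monomial (Finsupp.equivFunOnFinite.symm a) 1 := by
    rw [monomial_eq, C_1, one_mul, Finsupp.prod_fintype _ _ fun _ => pow_zero _]
    rfl
  rw [hmonomial, degreeOf_monomial_eq _ _ one_ne_zero]
  rfl

lemma totalDegree_X_pow_sub_one [Nontrivial R] (i : σ) (m : ℕ) :
    (X i ^ m - 1 : MvPolynomial σ R).totalDegree = m := by
  rcases m.eq_zero_or_pos with rfl | hm
  · simp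
  · rw [sub_eq_add_neg, totalDegree_add_eq_left_of_totalDegree_lt] <;>
      simp [totalDegree_X_pow, hm]

lemma homogeneousComponent_eq_zero_of_totalDegree_mul_le [IsDomain R]
    {p h : MvPolynomial σ R} {d k : ℕ} (hp : 0 < p.totalDegree)
    (hph : (p * h).totalDegree ≤ d) (hk : d ≤ k) : homogeneousComponent k h = 0 := by
  rcases eq_or_ne h 0 with rfl | hh
  · exact map_zero _
  · have hp0 : p ≠ 0 := by
      rintro rfl
      simp at hp
    rw [totalDegree_mul_of_isDomain hp0 hh] at hph
    exact homogeneousComponent_eq_zero _ _ (by omega)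

attribute [local instance] MvPolynomial.gradedAlgebra

lemma homogeneousComponent_mul_of_isHomogeneous {g : MvPolynomial σ R} {e : ℕ}
    (hg : g.IsHomogeneous e) (m : ℕ) (h : MvPolynomial σ R) :
    homogeneousComponent m (h * g) =
      if e ≤ m then homogeneousComponent (m - e) h * g else 0 := by
  simp only [← decomposition.decompose'_apply]
  exact DirectSum.coe_decompose_mul_of_right_mem (homogeneousSubmodule σ R) m hg

lemma exists_sub_sum_C_mul_mem_span_of_mem_span_range {ι : Type*} [Fintype ι]
    {g : ι → MvPolynomial σ R} {e : ι → ℕ} (hg : ∀ k, (g k).IsHomogeneous (e k))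
    {f : MvPolynomial σ R} {m : ℕ} (hf : f.IsHomogeneous m) (hfg : f ∈ Ideal.span (Set.range g)) :
    ∃ a : ι → R, (∀ k, e k ≠ m → a k = 0) ∧
      f - ∑ k, C (a k) * g k ∈ Ideal.span (g '' {k | e k < m}) := by
  obtain ⟨h, rfl⟩ := Ideal.mem_span_range_iff_exists_fun.mp hfg
  refine ⟨fun k => if e k = m then coeff 0 (h k) else 0, fun k hk => if_neg hk, ?_⟩
  rw [← homogeneousComponent_eq_self hf, map_sum, ← Finset.sum_sub_distrib]
  refine Ideal.sum_mem _ fun k _ => ?_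
  rw [homogeneousComponent_mul_of_isHomogeneous (hg k)]
  rcases lt_trichotomy (e k) m with hlt | rfl | hgt
  · simp only [hlt.le, hlt.ne, if_true, if_false, C_0, zero_mul, sub_zero]
    exact Ideal.mul_mem_left _ _ (Ideal.subset_span (Set.mem_image_of_mem g hlt))
  · simp only [le_refl, if_true, Nat.sub_self, homogeneousComponent_zero, sub_self, zero_mem]
  · simp only [hgt.not_ge, hgt.ne', if_false, C_0, zero_mul, sub_zero, zero_mem]

/- Comparing degrees, `h_k ≡ u * h_{k - m}` modulo `J` for the components of `h` in degrees
`k < d`, so all of them lie in `J`. -/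
lemma mem_of_sub_mul_sub_one_mem {J : Ideal (MvPolynomial σ R)}
    (hJ : J.IsHomogeneous (homogeneousSubmodule σ R)) {f h u : MvPolynomial σ R} {d m : ℕ}
    (hf : f.IsHomogeneous d) (hu : u.IsHomogeneous m) (hm : 0 < m)
    (hh : ∀ k, d ≤ k → homogeneousComponent k h = 0) (hfh : f - h * (u - 1) ∈ J) : f ∈ J := by
  have hcomp : ∀ k, homogeneousComponent k h ∈ J := by
    intro k
    induction k using Nat.strong_induction_on with
    | _ k ih =>
      rcases le_or_gt d k with hdk | hkd
      · rw [hh k hdk]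
        exact J.zero_mem
      · have hk := homogeneousComponent_mem_of_mem hJ hfh k
        rw [mul_sub_one, ← sub_add, map_add, map_sub, homogeneousComponent_of_mem hf,
          if_neg hkd.ne, zero_sub, homogeneousComponent_mul_of_isHomogeneous hu] at hk
        refine (J.add_mem_iff_right (J.neg_mem ?_)).mp hk
        split_ifs with hmk
        · exact J.mul_mem_right _ (ih _ (by omega))
        · exact J.zero_mem
  have hhJ : h ∈ J := (mem_iff_homogeneousComponent_mem hJ h).mpr hcomp
  exact (J.sub_mem_iff_left (J.mul_mem_right _ hhJ)).mp hfh

lemma isHomogeneous_span_range {ι : Type*} {g : ι → MvPolynomial σ R}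
    (hg : ∀ k, ∃ e, (g k).IsHomogeneous e) :
    (Ideal.span (Set.range g)).IsHomogeneous (homogeneousSubmodule σ R) :=
  Ideal.homogeneous_span _ _ (Set.forall_mem_range.mpr hg)

lemma eval_eq_zero_of_mem_span {S : Set (MvPolynomial σ R)} {y : σ → R}
    (hS : ∀ f ∈ S, eval y f = 0) {f : MvPolynomial σ R} (hf : f ∈ Ideal.span S) :
    eval y f = 0 :=
  Ideal.span_le (I := RingHom.ker (eval y)).mpr hS hf

theorem span_range_le_span_range_of_eval_eq_one [Nontrivial R] {ι : Type*} [Finite ι]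
    [DecidableEq ι] {g P : ι → MvPolynomial σ R} {e : ι → ℕ} {m : ℕ} {p : ι → σ → R}
    (hg : ∀ k, (g k).IsHomogeneous (e k)) (hP : ∀ i, (P i).IsHomogeneous m)
    (hPg : ∀ i, P i ∈ Ideal.span (Set.range g))
    (hPp : ∀ i j, eval (p j) (P i) = (1 : Matrix ι ι R) i j)
    (hgp : ∀ k j, e k < m → eval (p j) (g k) = 0) :
    Ideal.span (Set.range g) ≤ Ideal.span (Set.range P) := by
  cases nonempty_fintype ι
  choose A hA hPA using fun i =>
    exists_sub_sum_C_mul_mem_span_of_mem_span_range hg (hP i) (hPg i)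
  let B : Matrix ι ι R := .of fun k j => eval (p j) (g k)
  have hAB : Matrix.of A * B = 1 := by
    ext i j
    have hzero := eval_eq_zero_of_mem_span (y := p j)
      (Set.forall_mem_image.mpr fun k hk => hgp k j hk) (hPA i)
    simpa [B, hPp, Matrix.mul_apply, sub_eq_zero, eq_comm (a := (1 : Matrix ι ι R) i j)] using hzero
  have hBA : B * Matrix.of A = 1 := mul_eq_one_comm.mp hAB
  have hdeg : ∀ k, e k = m := by
    intro k
    by_contra hk
    have hkk : (B * Matrix.of A) k k = 1 := by rw [hBA, Matrix.one_apply_eq]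
    simp [Matrix.mul_apply, hA _ k hk] at hkk
  have hP_eq : P = ((Matrix.of A).map C).mulVec g := by
    funext i
    simpa [hdeg, sub_eq_zero, Matrix.mulVec, dotProduct] using hPA i
  have hg_eq : (B.map C).mulVec P = g := by
    rw [hP_eq, Matrix.mulVec_mulVec, ← Matrix.map_mul, hBA, Matrix.map_one _ C_0 C_1,
      Matrix.one_mulVec]
  rw [Ideal.span_le]
  rintro _ ⟨k, rfl⟩
  exact Ideal.mem_span_range_iff_exists_fun.mpr ⟨(B.map C) k, congrFun hg_eq k⟩

end Homogeneous

section VanishingIdeal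

variable {σ R : Type*} [CommRing R]

/-- The ideal `I(S)` generated by the homogeneous polynomials vanishing on a set `S` of vectors.
When `S` consists of representatives of the points of a projective set, this is the vanishing ideal
of that set. -/
noncomputable def homogeneousVanishingIdeal (S : Set (σ → R)) : Ideal (MvPolynomial σ R) :=
  Ideal.span {f | (∃ e, f.IsHomogeneous e) ∧ ∀ y ∈ S, eval y f = 0}

lemma mem_homogeneousVanishingIdeal_of_isHomogeneous {S : Set (σ → R)} {f : MvPolynomial σ R}
    {e : ℕ} (hf : f.IsHomogeneous e) (hS : ∀ y ∈ S, eval y f = 0) :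
    f ∈ homogeneousVanishingIdeal S :=
  Ideal.subset_span ⟨⟨e, hf⟩, hS⟩

lemma eval_eq_zero_of_mem_homogeneousVanishingIdeal {S : Set (σ → R)} {f : MvPolynomial σ R}
    (hf : f ∈ homogeneousVanishingIdeal S) {y : σ → R} (hy : y ∈ S) : eval y f = 0 :=
  eval_eq_zero_of_mem_span (fun _ hg => hg.2 y hy) hf

lemma homogeneousVanishingIdeal_anti {S T : Set (σ → R)} (h : S ⊆ T) :
    homogeneousVanishingIdeal T ≤ homogeneousVanishingIdeal S :=
  Ideal.span_mono fun _ hf => ⟨hf.1, fun y hy => hf.2 y (h hy)⟩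

variable {K : Type*} [Field K]

lemma exists_linear_form_eval_eq_zero_and_ne_zero [Finite σ] {y z : σ → K}
    (hy : y ∉ Submodule.span K {z}) :
    ∃ L : MvPolynomial σ K, L.IsHomogeneous 1 ∧ eval z L = 0 ∧ eval y L ≠ 0 := by
  classical
  cases nonempty_fintype σ
  obtain ⟨φ, hφy, hφz⟩ := Submodule.exists_le_ker_of_notMem hy
  let L : MvPolynomial σ K := ∑ i, C (φ fun j => if i = j then 1 else 0) * X i
  have heval : ∀ x, eval x L = φ x := fun x => by
    simp [L, LinearMap.pi_apply_eq_sum_univ φ x, mul_comm]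
  refine ⟨L, .sum _ _ _ fun i _ => isHomogeneous_C_mul_X _ _, ?_, by rwa [heval]⟩
  rw [heval]
  exact hφz (Submodule.mem_span_singleton_self z)

theorem exists_isHomogeneous_eval_ne_zero_of_forall_notMem_span [Finite σ] {S : Set (σ → K)}
    (hS : S.Finite) {y : σ → K} (hy : ∀ z ∈ S, y ∉ Submodule.span K {z}) :
    ∃ f : MvPolynomial σ K, (∃ e, f.IsHomogeneous e) ∧ (∀ z ∈ S, eval z f = 0) ∧ eval y f ≠ 0 := by
  choose! L hLhom hLz hLy using fun z hz => exists_linear_form_eval_eq_zero_and_ne_zero (hy z hz)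
  refine ⟨∏ z ∈ hS.toFinset, L z, ⟨_, .prod _ _ (fun _ => 1) ?_⟩, fun z hz => ?_, ?_⟩
  · exact fun z hz => hLhom z (hS.mem_toFinset.mp hz)
  · rw [map_prod]
    exact Finset.prod_eq_zero (hS.mem_toFinset.mpr hz) (hLz z hz)
  · rw [map_prod, Finset.prod_ne_zero_iff]
    exact fun z hz => hLy z (hS.mem_toFinset.mp hz)

theorem homogeneousVanishingIdeal_le_iff [Finite σ] {S T : Set (σ → K)} (hS : S.Finite) :
    homogeneousVanishingIdeal S ≤ homogeneousVanishingIdeal T ↔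
      ∀ y ∈ T, ∃ z ∈ S, y ∈ Submodule.span K {z} := by
  constructor
  · intro hle y hy
    by_contra! hcon
    obtain ⟨f, ⟨e, hf⟩, hfS, hfy⟩ := exists_isHomogeneous_eval_ne_zero_of_forall_notMem_span hS hcon
    exact hfy (eval_eq_zero_of_mem_homogeneousVanishingIdeal
      (hle (mem_homogeneousVanishingIdeal_of_isHomogeneous hf hfS)) hy)
  · refine fun h => Ideal.span_mono ?_
    rintro f ⟨⟨e, hf⟩, hfS⟩
    refine ⟨⟨e, hf⟩, fun y hy => ?_⟩
    obtain ⟨z, hz, hyz⟩ := h y hy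
    obtain ⟨c, rfl⟩ := Submodule.mem_span_singleton.mp hyz
    rw [eval_smul_of_isHomogeneous_s15 hf, hfS z hz, mul_zero]

end VanishingIdeal

section Torus

/-- The set `(K*)^σ` of vectors with nonzero coordinates; its classes form the projective torus. -/
def affineTorus (σ K : Type*) [Zero K] : Set (σ → K) :=
  {y | ∀ i, y i ≠ 0}

variable {K : Type*} [Field K] [Fintype K]

/-- The binomial `t_{k+1} ^ (q - 1) - t_0 ^ (q - 1)`, where `q` is the cardinality of `K`; these
binomials generate the vanishing ideal of the projective torus. -/
noncomputable def torusBinomial (K : Type*) [Field K] [Fintype K] {r : ℕ} (k : Fin r) :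
    MvPolynomial (Fin (r + 1)) K :=
  X k.succ ^ (Fintype.card K - 1) - X 0 ^ (Fintype.card K - 1)

lemma isHomogeneous_torusBinomial {r : ℕ} (k : Fin r) :
    (torusBinomial K k).IsHomogeneous (Fintype.card K - 1) :=
  (isHomogeneous_X_pow _ _).sub (isHomogeneous_X_pow _ _)

lemma eval_torusBinomial_of_mem_affineTorus {r : ℕ} (k : Fin r) {y : Fin (r + 1) → K}
    (hy : y ∈ affineTorus (Fin (r + 1)) K) : eval y (torusBinomial K k) = 0 := by
  simp only [torusBinomial, map_sub, map_pow, eval_X,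
    FiniteField.pow_card_sub_one_eq_one _ (hy _), sub_self]

lemma card_sub_one_pos {α : Type*} [Fintype α] [Nontrivial α] : 0 < Fintype.card α - 1 :=
  Nat.sub_pos_of_lt Fintype.one_lt_card

lemma eval_single_torusBinomial {r : ℕ} (i j : Fin r) :
    eval (Pi.single j.succ 1) (torusBinomial K i) = (1 : Matrix (Fin r) (Fin r) K) i j := by
  simp [torusBinomial, Pi.single_apply, Matrix.one_apply, ite_pow, (card_sub_one_pos (α := K)).ne']

lemma prod_X_sub_C_erase_zero [DecidableEq K] {σ : Type*} (i : σ) :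
    ∏ a ∈ (Finset.univ : Finset K).erase 0, (X i - C a) =
      (X i ^ (Fintype.card K - 1) - 1 : MvPolynomial σ K) := by
  have hnodal : ∏ u : Kˣ, (Polynomial.X - Polynomial.C (u : K)) =
      Polynomial.X ^ (Fintype.card K - 1) - 1 := by
    let : Fintype (⊤ : Subgroup Kˣ) := Fintype.ofFinite _
    simpa [Lagrange.nodal, Fintype.card_units] using
      Lagrange.nodal_subgroup_eq_X_pow_card_sub_one (⊤ : Subgroup Kˣ)
  calc ∏ a ∈ (Finset.univ : Finset K).erase 0, (X i - C a)
    _ = ∏ u : Kˣ, (X i - C (u : K)) :=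
        (Finset.prod_nbij (fun u : Kˣ => (u : K)) (by simp) Units.val_injective.injOn
          (fun a ha => ⟨Units.mk0 a (by simpa using ha), by simp⟩) fun _ _ => rfl).symm
    _ = X i ^ (Fintype.card K - 1) - 1 := by
        simpa [map_prod, algebraMap_eq] using
          congrArg (Polynomial.aeval (X i : MvPolynomial σ K)) hnodal

theorem exists_eq_sum_mul_X_pow_sub_one {σ : Type*} [Fintype σ] {f : MvPolynomial σ K}
    (hf : ∀ y ∈ affineTorus σ K, eval y f = 0) :
    ∃ h : σ → MvPolynomial σ K,
      (∀ i, ((X i ^ (Fintype.card K - 1) - 1) * h i).totalDegree ≤ f.totalDegree) ∧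
      f = ∑ i, h i * (X i ^ (Fintype.card K - 1) - 1) := by
  classical
  obtain ⟨h, hdeg, hsum⟩ := combinatorial_nullstellensatz_exists_linearCombination
    (fun _ : σ => (Finset.univ : Finset K).erase 0) (fun _ => ⟨1, by simp⟩) f
    (fun y hy => hf y fun i => Finset.ne_of_mem_erase (hy i))
  simp only [prod_X_sub_C_erase_zero] at hdeg hsum
  refine ⟨h, hdeg, hsum.trans ?_⟩
  rw [Finsupp.linearCombination_apply, Finsupp.sum_fintype]
  · rfl
  · exact fun _ => zero_smul _ _

lemma mem_span_range_torusBinomial {r d : ℕ} {f : MvPolynomial (Fin (r + 1)) K}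
    (hf : f.IsHomogeneous d) (hf0 : ∀ y ∈ affineTorus (Fin (r + 1)) K, eval y f = 0) :
    f ∈ Ideal.span (Set.range (torusBinomial (r := r) K)) := by
  obtain ⟨h, hdeg, hsum⟩ := exists_eq_sum_mul_X_pow_sub_one hf0
  have hdiff : f - (∑ i, h i) * (X 0 ^ (Fintype.card K - 1) - 1) =
      ∑ k : Fin r, h k.succ * torusBinomial K k := by
    rw [hsum, Finset.sum_mul, ← Finset.sum_sub_distrib, Fin.sum_univ_succ, sub_self, zero_add]
    refine Finset.sum_congr rfl fun k _ => ?_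
    rw [torusBinomial]
    ring
  refine mem_of_sub_mul_sub_one_mem (isHomogeneous_span_range fun k =>
    ⟨_, isHomogeneous_torusBinomial k⟩) hf (isHomogeneous_X_pow 0 _) (card_sub_one_pos (α := K))
    (h := ∑ i, h i) (fun k hk => ?_) ?_
  · rw [map_sum]
    refine Finset.sum_eq_zero fun i _ => homogeneousComponent_eq_zero_of_totalDegree_mul_le
      ?_ (hdeg i) (hf.totalDegree_le.trans hk)
    rw [totalDegree_X_pow_sub_one]
    exact card_sub_one_pos
  · rw [hdiff]
    exact Ideal.mem_span_range_iff_exists_fun.mpr ⟨_, rfl⟩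

theorem homogeneousVanishingIdeal_affineTorus (r : ℕ) :
    homogeneousVanishingIdeal (affineTorus (Fin (r + 1)) K) =
      Ideal.span (Set.range (torusBinomial K)) := by
  refine le_antisymm (Ideal.span_le.mpr ?_) (Ideal.span_le.mpr ?_)
  · rintro f ⟨⟨d, hf⟩, hf0⟩
    exact mem_span_range_torusBinomial hf hf0
  · rintro _ ⟨k, rfl⟩
    exact mem_homogeneousVanishingIdeal_of_isHomogeneous (isHomogeneous_torusBinomial k)
      fun _ hy => eval_torusBinomial_of_mem_affineTorus k hy

end Torus

section Toric

variable {σ τ K : Type*} [Fintype τ] [Field K]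

/-- The monomial parameterization `x ↦ (x^{v_j})_j`; it maps the torus `(K*)^τ` onto
representatives of the points of the toric set of `v`. -/
def monomialMap {K : Type*} [CommMonoid K] (v : σ → τ → ℕ) (x : τ → K) : σ → K :=
  fun j => ∏ t, x t ^ v j t

lemma monomialMap_mem_affineTorus (v : σ → τ → ℕ) {x : τ → K} (hx : x ∈ affineTorus τ K) :
    monomialMap v x ∈ affineTorus σ K :=
  fun _ => Finset.prod_ne_zero_iff.mpr fun t _ => pow_ne_zero _ (hx t)

theorem eval_monomialMap_eq_zero_of_totalDegree_mul_lt [Fintype K] {v : σ → τ → ℕ} {c : ℕ}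
    (hv : ∀ j t, v j t ≤ c) {f : MvPolynomial σ K}
    (hdeg : f.totalDegree * c < Fintype.card K - 1)
    (hf : ∀ x ∈ affineTorus τ K, eval (monomialMap v x) f = 0) (x : τ → K) :
    eval (monomialMap v x) f = 0 := by
  classical
  let F : MvPolynomial τ K := aeval (fun j => ∏ t, X t ^ v j t) f
  have heval : ∀ x, eval x F = eval (monomialMap v x) f := by
    intro x
    have hC : (eval x).comp (algebraMap K (MvPolynomial τ K)) = RingHom.id K :=
      RingHom.ext fun _ => eval_C _
    simp only [F, map_aeval, map_prod, map_pow, eval_X, hC]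
    rfl
  have hF : F = 0 := by
    refine eq_zero_of_eval_zero_at_prod_finset F (fun _ => Finset.univ.erase 0) (fun t => ?_)
      fun x hx => (heval x).trans (hf x fun t => Finset.ne_of_mem_erase (hx t))
    rw [Finset.card_erase_of_mem (Finset.mem_univ 0), Finset.card_univ]
    exact (degreeOf_aeval_le (fun j => (degreeOf_prod_X_pow (v j) t).trans_le (hv j t))
      f).trans_lt hdeg
  rw [← heval, hF, map_zero]

lemma monomialMap_natCast_eq_single {R : Type*} [CommSemiring R] [DecidableEq σ] {v : σ → τ → ℕ}
    (hv : ∀ i t, v i t ≤ 1) (hclutter : ∀ i j, i ≠ j → ¬ ∀ t, v i t ≤ v j t) (i : σ) :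
    monomialMap v (fun t => (v i t : R)) = Pi.single i 1 := by
  funext j
  rcases eq_or_ne j i with rfl | hji
  · rw [Pi.single_eq_same]
    refine Finset.prod_eq_one fun t _ => ?_
    rcases Nat.le_one_iff_eq_zero_or_eq_one.mp (hv j t) with h | h <;> simp [h]
  · rw [Pi.single_eq_of_ne hji]
    obtain ⟨t, ht⟩ := not_forall.mp (hclutter j i hji)
    have hj := hv j t
    exact Finset.prod_eq_zero (Finset.mem_univ t)
      (by simp [show v i t = 0 by omega, show v j t ≠ 0 by omega])

theorem eval_single_eq_zero_of_mem_homogeneousVanishingIdeal [Fintype K] [DecidableEq σ]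
    {v : σ → τ → ℕ} (hv : ∀ i t, v i t ≤ 1) (hclutter : ∀ i j, i ≠ j → ¬ ∀ t, v i t ≤ v j t)
    {f : MvPolynomial σ K} {d : ℕ} (hf : f.IsHomogeneous d) (hd : d < Fintype.card K - 1)
    (hfI : f ∈ homogeneousVanishingIdeal (monomialMap v '' affineTorus τ K)) (i : σ) :
    eval (Pi.single i 1) f = 0 := by
  rw [← monomialMap_natCast_eq_single hv hclutter]
  refine eval_monomialMap_eq_zero_of_totalDegree_mul_lt hv ?_ (fun x hx =>
    eval_eq_zero_of_mem_homogeneousVanishingIdeal hfI (Set.mem_image_of_mem _ hx)) _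
  rw [mul_one]
  exact hf.totalDegree_le.trans_lt hd

end Toric

section ProjectiveTorus

variable {K : Type} [Field K] {n s : ℕ}

lemma mk_mem_projTorus_iff {y : Fin s → K} (hy : y ≠ 0) :
    Projectivization.mk K y hy ∈ projTorus K s ↔ y ∈ affineTorus (Fin s) K := by
  obtain ⟨a, ha⟩ := Projectivization.exists_smul_eq_mk_rep K y hy
  simp [projTorus, affineTorus, ← ha, Units.smul_def]

lemma mk_mem_toricSet_iff (hs : 1 ≤ s) (v : Fin s → Fin n → ℕ) {y : Fin s → K} (hy : y ≠ 0) :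
    Projectivization.mk K y hy ∈ toricSet K hs v ↔
      ∃ z ∈ monomialMap v '' affineTorus (Fin n) K, y ∈ Submodule.span K {z} := by
  simp only [toricSet, Set.mem_ofPred_eq, Projectivization.mk_eq_mk_iff', Set.exists_mem_image,
    Submodule.mem_span_singleton, exists_prop]
  rfl

lemma toricSet_subset_projTorus (hs : 1 ≤ s) (v : Fin s → Fin n → ℕ) :
    toricSet K hs v ⊆ projTorus K s := by
  rintro _ ⟨x, hx, rfl⟩
  exact (mk_mem_projTorus_iff _).mpr (monomialMap_mem_affineTorus v hx)

theorem toricSet_eq_projTorus_iff [Finite K] (hs : 1 ≤ s) (v : Fin s → Fin n → ℕ) :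
    toricSet K hs v = projTorus K s ↔
      homogeneousVanishingIdeal (monomialMap v '' affineTorus (Fin n) K) ≤
        homogeneousVanishingIdeal (affineTorus (Fin s) K) := by
  rw [homogeneousVanishingIdeal_le_iff (Set.toFinite _), Set.Subset.antisymm_iff,
    and_iff_right (toricSet_subset_projTorus hs v)]
  constructor
  · intro h y hy
    have hy0 : y ≠ 0 := fun h0 => hy ⟨0, hs⟩ (congrFun h0 _)
    exact (mk_mem_toricSet_iff hs v hy0).mp (h ((mk_mem_projTorus_iff hy0).mpr hy))
  · intro h p hp
    rw [← p.mk_rep, mk_mem_toricSet_iff]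
    exact h p.rep hp

end ProjectiveTorus

/-- Let `v_1,…,v_s ∈ {0,1}^n` be the characteristic vectors of the edges of a clutter
and `X` the algebraic toric set they parameterize. The vanishing ideal `I(X)` is a
complete intersection (generated by `s-1` homogeneous polynomials) if and only if
`X` is the projective torus in `ℙ^(s-1)`. -/
theorem stmt_15 (K : Type) [Field K] [Fintype K] (q n s : ℕ)
    (hK : Fintype.card K = q) (hs : 1 ≤ s)
    (v : Fin s → Fin n → ℕ) (hv01 : ∀ i t, v i t ≤ 1)
    (hinj : Function.Injective v)
    (hclutter : ∀ i j : Fin s, i ≠ j → ¬ ∀ t, v i t ≤ v j t) :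
    (∃ g : Fin (s - 1) → MvPolynomial (Fin s) K,
        (∀ i, ∃ e, (g i).IsHomogeneous e) ∧
        Ideal.span {f : MvPolynomial (Fin s) K |
          (∃ e, f.IsHomogeneous e) ∧
          ∀ x : Fin n → K, (∀ t, x t ≠ 0) →
            eval (fun j : Fin s => ∏ t, x t ^ v j t) f = 0} =
          Ideal.span (Set.range g)) ↔
    toricSet K hs v = projTorus K s := by
  obtain ⟨r, rfl⟩ := Nat.exists_eq_add_of_le' hs
  rw [toricSet_eq_projTorus_iff, homogeneousVanishingIdeal_affineTorus]
  have hIX : Ideal.span {f : MvPolynomial (Fin (r + 1)) K | (∃ e, f.IsHomogeneous e) ∧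
      ∀ x : Fin n → K, (∀ t, x t ≠ 0) → eval (fun j => ∏ t, x t ^ v j t) f = 0} =
      homogeneousVanishingIdeal (monomialMap v '' affineTorus (Fin n) K) := by
    simp only [homogeneousVanishingIdeal, Set.forall_mem_image]
    rfl
  have hTX : Ideal.span (Set.range (torusBinomial K)) ≤
      homogeneousVanishingIdeal (monomialMap v '' affineTorus (Fin n) K) :=
    homogeneousVanishingIdeal_affineTorus (K := K) r ▸ homogeneousVanishingIdeal_anti
      (Set.image_subset_iff.mpr fun _ => monomialMap_mem_affineTorus v)
  rw [hIX, Nat.add_sub_cancel]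
  constructor
  · rintro ⟨g, hg, hIg⟩
    choose e he using hg
    rw [hIg] at hTX ⊢
    refine span_range_le_span_range_of_eval_eq_one he isHomogeneous_torusBinomial
      (fun i => hTX (Ideal.subset_span ⟨i, rfl⟩)) eval_single_torusBinomial fun k j hk => ?_
    exact eval_single_eq_zero_of_mem_homogeneousVanishingIdeal hv01 hclutter (he k) hk
      (hIg ▸ Ideal.subset_span ⟨k, rfl⟩) j.succ
  · exact fun h => ⟨torusBinomial K, fun k => ⟨_, isHomogeneous_torusBinomial k⟩, h.antisymm hTX⟩
end

section
/- Let K be a finite field with q elements, let v_1,…,v_s ∈ ℕ^n, let X be the algebraic toric set parameterized by y^{v_1},…,y^{v_s}, and let δ_d denote the minimum distance of the parameterized code C_X(d) for d ≥ 1. If δ_d > 1, then δ_{d+1} < δ_d; and if δ_d = 1, then δ_{d+1} = 1. -/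
open MvPolynomial

/-!
Multiplying a codeword of minimum weight by a linear form can only shrink its support. If the
support contains two distinct points, a linear form vanishing at one and not at the other shrinks
it strictly without making it empty. If the support is a single point, a coordinate that is nonzero
there preserves it.
-/

section MinDist

variable {K ι : Type} [Field K]

theorem exists_rep_apply_ne_zero (p : Projectivization K (ι → K)) : ∃ i, p.rep i ≠ 0 :=
  Function.ne_iff.mp p.rep_nonzero

theorem eq_of_forall_rep_mul_rep_eq {p r : Projectivization K (ι → K)}
    (hminors : ∀ i j, p.rep i * r.rep j = p.rep j * r.rep i) : p = r := by
  obtain ⟨i, hi⟩ := exists_rep_apply_ne_zero p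
  have hproportional : (r.rep i / p.rep i) • p.rep = r.rep := by
    ext j
    rw [Pi.smul_apply, smul_eq_mul, div_mul_eq_mul_div, div_eq_iff hi, mul_comm,
      ← hminors, mul_comm]
  rw [← p.mk_rep, ← r.mk_rep, eq_comm, Projectivization.mk_eq_mk_iff']
  exact ⟨_, hproportional⟩

theorem exists_isHomogeneous_one_eval_rep_eq_zero_ne_zero {p r : Projectivization K (ι → K)}
    (hpr : p ≠ r) :
    ∃ L : MvPolynomial ι K, L.IsHomogeneous 1 ∧ eval p.rep L = 0 ∧ eval r.rep L ≠ 0 := by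
  obtain ⟨i, j, hminor⟩ : ∃ i j, p.rep i * r.rep j ≠ p.rep j * r.rep i := by
    contrapose! hpr
    exact eq_of_forall_rep_mul_rep_eq hpr
  refine ⟨C (p.rep i) * X j - C (p.rep j) * X i,
    ((isHomogeneous_X K j).C_mul _).sub ((isHomogeneous_X K i).C_mul _), ?_, ?_⟩
  · simp [mul_comm]
  · simpa [sub_eq_zero] using hminor

/-- The support of the codeword defined by `F`: the points of `Y` at which `F` does not vanish.
For homogeneous `F` it does not depend on the chosen representatives `p.rep`. -/
def codewordSupport (Y : Set (Projectivization K (ι → K))) (F : MvPolynomial ι K) :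
    Set (Projectivization K (ι → K)) :=
  {p ∈ Y | eval p.rep F ≠ 0}

variable {Y : Set (Projectivization K (ι → K))} {d : ℕ}

theorem codewordSupport_mul (F G : MvPolynomial ι K) :
    codewordSupport Y (F * G) = codewordSupport Y F ∩ codewordSupport Y G := by
  simp only [codewordSupport, map_mul, mul_ne_zero_iff, Set.sep_and]

theorem minDist_le_ncard_codewordSupport {F : MvPolynomial ι K} (hF : F.IsHomogeneous d)
    (hne : (codewordSupport Y F).Nonempty) : minDist K Y d ≤ (codewordSupport Y F).ncard :=
  Nat.sInf_le ⟨F, hF, hne, rfl⟩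

theorem exists_ncard_codewordSupport_eq_minDist (hY : Y.Nonempty) (d : ℕ) :
    ∃ F : MvPolynomial ι K, F.IsHomogeneous d ∧ (codewordSupport Y F).Nonempty ∧
      (codewordSupport Y F).ncard = minDist K Y d := by
  obtain ⟨p, hp⟩ := hY
  obtain ⟨i, hi⟩ := exists_rep_apply_ne_zero p
  have hpow : eval p.rep (X i ^ d) ≠ 0 := by simpa using pow_ne_zero d hi
  have hweights : {w | ∃ F : MvPolynomial ι K, F.IsHomogeneous d ∧
      (codewordSupport Y F).Nonempty ∧ w = (codewordSupport Y F).ncard}.Nonempty :=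
    ⟨_, X i ^ d, isHomogeneous_X_pow i d, ⟨p, hp, hpow⟩, rfl⟩
  obtain ⟨F, hF, hne, hcard⟩ := Nat.sInf_mem hweights
  exact ⟨F, hF, hne, hcard.symm⟩

theorem minDist_empty (d : ℕ) : minDist K (∅ : Set (Projectivization K (ι → K))) d = 0 := by
  simp [minDist]

theorem nonempty_of_minDist_pos (h : 0 < minDist K Y d) : Y.Nonempty := by
  rw [Set.nonempty_iff_ne_empty]
  rintro rfl
  exact h.ne' (minDist_empty d)

theorem minDist_pos (hfin : Y.Finite) (hne : Y.Nonempty) (d : ℕ) : 0 < minDist K Y d := by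
  obtain ⟨F, -, hFne, hcard⟩ := exists_ncard_codewordSupport_eq_minDist hne d
  rw [← hcard]
  exact (Set.ncard_pos (hfin.subset (Set.sep_subset _ _))).mpr hFne

theorem minDist_succ_le_minDist (hfin : Y.Finite) (d : ℕ) :
    minDist K Y (d + 1) ≤ minDist K Y d := by
  obtain rfl | hne := Y.eq_empty_or_nonempty
  · simp only [minDist_empty, le_refl]
  obtain ⟨F, hF, ⟨p, hp⟩, hcard⟩ := exists_ncard_codewordSupport_eq_minDist hne d
  obtain ⟨i, hi⟩ := exists_rep_apply_ne_zero p
  have hpX : p ∈ codewordSupport Y (X i) := ⟨hp.1, by rwa [eval_X]⟩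
  calc minDist K Y (d + 1)
      ≤ (codewordSupport Y (F * X i)).ncard :=
        minDist_le_ncard_codewordSupport (hF.mul (isHomogeneous_X K i))
          ⟨p, by rw [codewordSupport_mul]; exact ⟨hp, hpX⟩⟩
    _ ≤ (codewordSupport Y F).ncard := by
        rw [codewordSupport_mul]
        exact Set.ncard_inter_le_ncard_left _ _ (hfin.subset (Set.sep_subset _ _))
    _ = minDist K Y d := hcard

theorem minDist_succ_lt_minDist (h : 1 < minDist K Y d) :
    minDist K Y (d + 1) < minDist K Y d := by
  obtain ⟨F, hF, -, hcard⟩ :=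
    exists_ncard_codewordSupport_eq_minDist (nonempty_of_minDist_pos (zero_lt_one.trans h)) d
  obtain ⟨⟨p, hp, r, hr, hpr⟩, hfin⟩ :=
    Set.one_lt_ncard_iff_nontrivial_and_finite.mp (h.trans_eq hcard.symm)
  obtain ⟨L, hL, hLp, hLr⟩ := exists_isHomogeneous_one_eval_rep_eq_zero_ne_zero hpr
  calc minDist K Y (d + 1)
      ≤ (codewordSupport Y (F * L)).ncard :=
        minDist_le_ncard_codewordSupport (hF.mul hL)
          ⟨r, by rw [codewordSupport_mul]; exact ⟨hr, hr.1, hLr⟩⟩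
    _ < (codewordSupport Y F).ncard := by
        rw [codewordSupport_mul]
        exact Set.ncard_lt_ncard
          (Set.inter_ssubset_left_iff.mpr fun hsub => (hsub hp).2 hLp) hfin
    _ = minDist K Y d := hcard

theorem stmt_19_general (hfin : Y.Finite) (d : ℕ) :
    (1 < minDist K Y d → minDist K Y (d + 1) < minDist K Y d) ∧
    (minDist K Y d = 1 → minDist K Y (d + 1) = 1) := by
  refine ⟨minDist_succ_lt_minDist, fun h => le_antisymm ?_ ?_⟩
  · exact (minDist_succ_le_minDist hfin d).trans_eq h
  · exact minDist_pos hfin (nonempty_of_minDist_pos (zero_lt_one.trans_eq h.symm)) (d + 1)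

end MinDist

/-- For an algebraic toric set `X` parameterized by arbitrary monomials
`y^{v_1},…,y^{v_s}` and `d ≥ 1`: if the minimum distance `δ_d` of `C_X(d)` is
greater than `1` then `δ_{d+1} < δ_d`, and if `δ_d = 1` then `δ_{d+1} = 1`. -/
theorem stmt_19 (K : Type) [Field K] [Fintype K] (q n s d : ℕ)
    (hK : Fintype.card K = q) (hs : 1 ≤ s) (hd : 1 ≤ d)
    (v : Fin s → Fin n → ℕ) :
    (1 < minDist K (toricSet K hs v) d →
      minDist K (toricSet K hs v) (d + 1) < minDist K (toricSet K hs v) d) ∧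
    (minDist K (toricSet K hs v) d = 1 →
      minDist K (toricSet K hs v) (d + 1) = 1) :=
  stmt_19_general (Set.toFinite _) d
end
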